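/- Assuming the Riemann Hypothesis, for every complex number s with Re(s) > 1/2 such that s - 1 does not lie on the nonpositive real axis (i.e., s is not a real number in (1/2, 1]), one has ζ(2s)/ζ(s) = lim_{x → ∞} exp(−E₁((s-1)·log x)) · ∏_{p ≤ x, p prime} (1 + p^{-s})^{-1}, where the product runs over all primes p ≤ x. -/

import Mathlib

open Filter

/-- The exponential integral `E₁(z) = -γ - log z - ∑_{k=1}^∞ (-z)^k / (k·k!)`. -/
noncomputable def expIntegralE1 (z : ℂ) : ℂ :=
  -(Real.eulerMascheroniConstant : ℂ) - Complex.log z -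
    ∑' k : ℕ, (-z) ^ (k + 1) / (((k + 1) * Nat.factorial (k + 1) : ℕ) : ℂ)

/-! Let `Re s > σ₀` be a zero-free half-plane, `σ₀ ≥ 1/2`. Borel–Carathéodory for a logarithm of
the entire function `(s - 1) ζ(s)`, in discs around `2 + it`, gives `ζ'/ζ(s) ≪ log |Im s|` to the
right of any line `Re s = σ > σ₀`. The Perron integral of the Riesz mean `∫₀ˣ ψ` converges
absolutely, so it can be shifted to such a line; differencing the Riesz mean over `[x, x + 1]` gives
`ψ(x) - x ≪ x ^ β`, hence `θ(x) - x ≪ x ^ β`, for every `β > σ₀`.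

Summing `p⁻ˢ = (p⁻ˢ / log p) log p` by parts against `θ(t) = t + (θ(t) - t)`, the main term
contributes exactly `-E₁((s - 1) log x)`, whose derivative in `x` is `x⁻ˢ / log x`. Hence
`-E₁((s - 1) log x) - ∑ p ≤ x, p⁻ˢ` converges as `x → ∞`, to a holomorphic function of `s`. As
`∑ (p⁻ˢ - log (1 + p⁻ˢ))` converges for `Re s > 1/2`, the limit in the theorem exists and is
holomorphic on the slit half-plane. For real `s > 1` it is `ζ(2s) / ζ(s)`, by the Euler product
and `E₁(x) → 0`; the identity theorem does the rest. -/

section TruncatedMellin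

open MeasureTheory Set

variable {g : ℝ → ℂ} {a β C : ℝ}

lemma integrableOn_Ioi_mul_cpow (ha : 0 < a) (hg : Measurable g)
    (hbound : ∀ t > a, ‖g t‖ ≤ C * t ^ β) {s : ℂ} (hs : β < s.re) :
    IntegrableOn (fun t : ℝ => g t * (t : ℂ) ^ (-s - 1)) (Ioi a) := by
  refine ((integrableOn_Ioi_rpow_of_lt (a := β - s.re - 1) (by linarith) ha).const_mul C).mono'
    (hg.mul (Complex.measurable_ofReal.pow_const _)).aestronglyMeasurable ?_
  refine (ae_restrict_iff' measurableSet_Ioi).2 (ae_of_all _ fun t (ht : a < t) => ?_)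
  have ht0 : 0 < t := ha.trans ht
  calc ‖g t * (t : ℂ) ^ (-s - 1)‖ ≤ C * t ^ β * t ^ (-s.re - 1) := by
        rw [norm_mul, Complex.norm_cpow_eq_rpow_re_of_pos ht0]
        simpa using mul_le_mul_of_nonneg_right (hbound t ht) (by positivity)
    _ = C * t ^ (β - s.re - 1) := by rw [mul_assoc, ← Real.rpow_add ht0]; ring_nf

lemma locallyIntegrableOn_indicator_Ioi (hg : Measurable g)
    (hbound : ∀ t > a, ‖g t‖ ≤ C * t ^ β) :
    LocallyIntegrableOn ((Ioi a).indicator g) (Ioi 0) := by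
  have hpow : LocallyIntegrableOn (fun t : ℝ => C * t ^ β) (Ioi 0) :=
    ContinuousOn.locallyIntegrableOn (continuousOn_const.mul fun t ht =>
      (Real.continuousAt_rpow_const _ _ (.inl (ne_of_gt ht))).continuousWithinAt) measurableSet_Ioi
  refine hpow.mono (hg.indicator measurableSet_Ioi).aestronglyMeasurable (ae_of_all _ fun t => ?_)
  by_cases ht : t ∈ Ioi a
  · simpa [ht] using (hbound t ht).trans (le_abs_self _)
  · simp only [indicator_of_notMem ht, norm_zero, norm_nonneg]

lemma differentiableAt_integral_Ioi_mul_cpow (ha : 0 < a) (hg : Measurable g)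
    (hbound : ∀ t > a, ‖g t‖ ≤ C * t ^ β) {s : ℂ} (hs : β < s.re) :
    DifferentiableAt ℂ (fun s : ℂ => ∫ t in Ioi a, g t * (t : ℂ) ^ (-s - 1)) s := by
  have hmellin : (fun s : ℂ => ∫ t in Ioi a, g t * (t : ℂ) ^ (-s - 1)) =
      mellin ((Ioi a).indicator g) ∘ Neg.neg := by
    ext z
    have hind : (fun t : ℝ => (t : ℂ) ^ (-z - 1) • (Ioi a).indicator g t) =
        (Ioi a).indicator fun t : ℝ => g t * (t : ℂ) ^ (-z - 1) := by
      ext t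
      by_cases ht : t ∈ Ioi a <;> simp [ht, mul_comm]
    rw [Function.comp_apply, mellin, hind, setIntegral_indicator measurableSet_Ioi, Ioi_inter_Ioi,
      max_eq_right ha.le]
  have htop : (Ioi a).indicator g =O[atTop] fun t : ℝ => t ^ (-(-β)) := by
    refine .of_bound C ?_
    filter_upwards [eventually_gt_atTop a] with t ht
    have ht0 : 0 < t := ha.trans ht
    simpa [indicator_of_mem (show t ∈ Ioi a from ht), abs_of_nonneg (Real.rpow_nonneg ht0.le β)]
      using hbound t ht
  have hbot : (Ioi a).indicator g =O[nhdsWithin 0 (Ioi 0)]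
      fun t : ℝ => t ^ (-((-s).re - 1)) := by
    refine EventuallyEq.trans_isBigO ?_ (Asymptotics.isBigO_zero _ _)
    filter_upwards [mem_nhdsWithin_of_mem_nhds (Iio_mem_nhds ha)] with t ht
    simp [(mem_Iio.1 ht).le]
  rw [hmellin]
  exact (mellin_differentiableAt_of_isBigO_rpow (locallyIntegrableOn_indicator_Ioi hg hbound)
    htop (by simpa using hs) hbot (by linarith)).comp s differentiableAt_id.neg

end TruncatedMellin

section ZetaBounds

open MeasureTheory Set

lemma riemannZeta₁_ne_zero {s : ℂ} (hs : riemannZeta s ≠ 0) : riemannZeta₁ s ≠ 0 := by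
  rcases eq_or_ne s 1 with rfl | h1
  · simp
  · exact right_ne_zero_of_mul (riemannZeta_eq_inv_sub_mul h1 ▸ hs)

lemma riemannZeta₁_eq_sub_mul {s : ℂ} (hs : s ≠ 1) :
    riemannZeta₁ s = (s - 1) * riemannZeta s := by
  rw [riemannZeta_eq_inv_sub_mul hs, mul_inv_cancel_left₀ (sub_ne_zero.2 hs)]

lemma measurable_ofReal_fract : Measurable fun t : ℝ => ((Int.fract t : ℝ) : ℂ) :=
  Complex.measurable_ofReal.comp measurable_fract

lemma norm_ofReal_fract_le (t : ℝ) : ‖((Int.fract t : ℝ) : ℂ)‖ ≤ 1 * t ^ (0 : ℝ) := by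
  rw [Complex.norm_of_nonneg (Int.fract_nonneg t), Real.rpow_zero, mul_one]
  exact (Int.fract_lt_one t).le

lemma riemannZeta_eq_integral_floor {s : ℂ} (hs : 1 < s.re) :
    riemannZeta s = s * ∫ t in Ioi (1 : ℝ), (⌊t⌋₊ : ℂ) * (t : ℂ) ^ (-s - 1) := by
  have h := LSeries_eq_mul_integral_of_nonneg (fun _ => 1) zero_le_one hs
    (.of_bound 1 (by simp)) fun _ => zero_le_one
  have hL : LSeries (fun _ => 1) s = riemannZeta s := LSeries_one_eq_riemannZeta hs
  simpa [hL, neg_add', -neg_add_rev] using h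

lemma riemannZeta_eq_sub_integral_fract {s : ℂ} (hs : 1 < s.re) :
    riemannZeta s = s / (s - 1) -
      s * ∫ t in Ioi (1 : ℝ), ((Int.fract t : ℝ) : ℂ) * (t : ℂ) ^ (-s - 1) := by
  have hsplit : ∀ t ∈ Ioi (1 : ℝ), (⌊t⌋₊ : ℂ) * (t : ℂ) ^ (-s - 1) =
      (t : ℂ) ^ (-s) - ((Int.fract t : ℝ) : ℂ) * (t : ℂ) ^ (-s - 1) := by
    intro t ht
    have ht0 : 0 < t := one_pos.trans ht
    have hfloor : (⌊t⌋₊ : ℂ) = t - ((Int.fract t : ℝ) : ℂ) := by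
      rw [← Complex.ofReal_sub, Int.self_sub_fract, ← natCast_floor_eq_intCast_floor ht0.le,
        Complex.ofReal_natCast]
    have hpow : (t : ℂ) ^ (-s) = t * (t : ℂ) ^ (-s - 1) := by
      rw [Complex.cpow_sub _ _ (by exact_mod_cast ht0.ne'), Complex.cpow_one,
        mul_div_cancel₀ _ (by exact_mod_cast ht0.ne')]
    rw [hfloor, hpow, sub_mul]
  have hs' : (-s).re < -1 := by simpa using hs
  rw [riemannZeta_eq_integral_floor hs, setIntegral_congr_fun measurableSet_Ioi hsplit,
    integral_sub (integrableOn_Ioi_cpow_of_lt hs' one_pos)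
      (integrableOn_Ioi_mul_cpow one_pos measurable_ofReal_fract
        (fun t _ => norm_ofReal_fract_le t) (by linarith)),
    integral_Ioi_cpow_of_lt hs' one_pos, mul_sub, Complex.ofReal_one, Complex.one_cpow,
    neg_add_eq_sub, ← neg_sub s 1, neg_div_neg_eq, mul_one_div]

lemma riemannZeta₁_eq_sub_integral_fract {s : ℂ} (hs : 0 < s.re) :
    riemannZeta₁ s = s -
      s * (s - 1) * ∫ t in Ioi (1 : ℝ), ((Int.fract t : ℝ) : ℂ) * (t : ℂ) ^ (-s - 1) := by
  have hopen (c : ℝ) : IsOpen {z : ℂ | c < z.re} := isOpen_lt continuous_const Complex.continuous_re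
  have hdiff : DifferentiableOn ℂ (fun z : ℂ => z - z * (z - 1) *
      ∫ t in Ioi (1 : ℝ), ((Int.fract t : ℝ) : ℂ) * (t : ℂ) ^ (-z - 1)) {z | 0 < z.re} :=
    fun z hz => (differentiableAt_id.sub
      ((differentiableAt_id.mul (differentiableAt_id.sub_const 1)).mul
      (differentiableAt_integral_Ioi_mul_cpow one_pos measurable_ofReal_fract
        (fun t _ => norm_ofReal_fract_le t) hz))).differentiableWithinAt
  refine (differentiable_riemannZeta₁.differentiableOn.analyticOnNhd
    (hopen 0)).eqOn_of_preconnected_of_eventuallyEq (hdiff.analyticOnNhd (hopen 0))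
    (convex_halfSpace_re_gt 0).isPreconnected (z₀ := 2) (by simp) ?_ hs
  filter_upwards [(hopen 1).mem_nhds (show (2 : ℂ) ∈ {z : ℂ | 1 < z.re} by simp)] with z hz
  have hz1 : z ≠ 1 := by rintro rfl; simp at hz
  have : z - 1 ≠ 0 := sub_ne_zero.2 hz1
  rw [riemannZeta₁_eq_sub_mul hz1, riemannZeta_eq_sub_integral_fract hz]
  field_simp

lemma norm_integral_fract_le {s : ℂ} {c : ℝ} (hc : 0 < c) (hs : c ≤ s.re) :
    ‖∫ t in Ioi (1 : ℝ), ((Int.fract t : ℝ) : ℂ) * (t : ℂ) ^ (-s - 1)‖ ≤ 1 / c := by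
  have hexp : -c - 1 < -1 := by linarith
  calc _ ≤ ∫ t in Ioi (1 : ℝ), t ^ (-c - 1) := by
        refine norm_integral_le_of_norm_le (integrableOn_Ioi_rpow_of_lt hexp one_pos)
          ((ae_restrict_iff' measurableSet_Ioi).2 (ae_of_all _ fun t (ht : 1 < t) => ?_))
        have ht0 : 0 < t := one_pos.trans ht
        rw [norm_mul, Complex.norm_cpow_eq_rpow_re_of_pos ht0, ← one_mul (t ^ (-c - 1))]
        gcongr
        · simpa using norm_ofReal_fract_le t
        · exact ht.le
        · simpa using hs
    _ = 1 / c := by rw [integral_Ioi_rpow_of_lt hexp one_pos, Real.one_rpow]; simp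

lemma norm_riemannZeta₁_le {s : ℂ} {c : ℝ} (hc : 0 < c) (hs : c ≤ s.re) :
    ‖riemannZeta₁ s‖ ≤ (1 + 1 / c) * (1 + ‖s‖) ^ 2 := by
  have hs1 : ‖s - 1‖ ≤ ‖s‖ + 1 := by simpa using norm_sub_le s 1
  rw [riemannZeta₁_eq_sub_integral_fract (hc.trans_le hs)]
  calc _ ≤ ‖s‖ + ‖s‖ * ‖s - 1‖ * (1 / c) := by
        refine (norm_sub_le _ _).trans ?_
        rw [norm_mul, norm_mul]
        gcongr
        exact norm_integral_fract_le hc hs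
    _ ≤ ‖s‖ + ‖s‖ * (‖s‖ + 1) * (1 / c) := by gcongr
    _ ≤ (1 + 1 / c) * (1 + ‖s‖) ^ 2 := by
        have : 0 < 1 / c := by positivity
        nlinarith [norm_nonneg s, mul_nonneg this.le (norm_nonneg s)]

lemma exists_le_norm_riemannZeta {σ : ℝ} (hσ : 1 < σ) :
    ∃ c > 0, ∀ s : ℂ, σ ≤ s.re → c ≤ ‖riemannZeta s‖ := by
  set S : ℝ := ∑' n : ℕ, ‖LSeries.term 1 (σ : ℂ) n‖
  have hsum : Summable fun n => ‖LSeries.term 1 (σ : ℂ) n‖ :=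
    (LSeriesSummable_one_iff.2 (by simpa using hσ)).norm
  have : 0 ≤ S := tsum_nonneg fun _ => norm_nonneg _
  refine ⟨1 / (S + 1), by positivity, fun s hs => ?_⟩
  have hterm (n : ℕ) : ‖LSeries.term (fun n => (ArithmeticFunction.moebius n : ℂ)) s n‖ ≤
      ‖LSeries.term 1 (σ : ℂ) n‖ := by
    refine (LSeries.norm_term_le s ?_).trans (LSeries.norm_term_le_of_re_le_re 1 (by simpa) n)
    rw [Complex.norm_intCast, Pi.one_apply, norm_one]
    exact_mod_cast ArithmeticFunction.abs_moebius_le_one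
  have hmoebius : ‖LSeries (fun n => (ArithmeticFunction.moebius n : ℂ)) s‖ ≤ S :=
    tsum_of_norm_bounded hsum.hasSum hterm
  have hmul := ArithmeticFunction.LSeries_zeta_mul_Lseries_moebius (hσ.trans_le hs)
  rw [ArithmeticFunction.LSeries_zeta_eq_riemannZeta (hσ.trans_le hs)] at hmul
  rw [div_le_iff₀ (by positivity)]
  calc 1 = ‖riemannZeta s‖ * ‖LSeries (fun n => (ArithmeticFunction.moebius n : ℂ)) s‖ := by
        rw [← norm_mul, hmul, norm_one]
    _ ≤ ‖riemannZeta s‖ * (S + 1) := by gcongr; linarith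

end ZetaBounds

section LogDeriv

open Complex Metric

variable {f : ℂ → ℂ} {c : ℂ} {R : ℝ}

lemma exists_hasDerivAt_logDeriv_and_eq_mul_exp (hR : 0 < R) (hf : DifferentiableOn ℂ f (ball c R))
    (hne : ∀ z ∈ ball c R, f z ≠ 0) :
    ∃ g : ℂ → ℂ, g c = 0 ∧ ∀ z ∈ ball c R,
      HasDerivAt g (logDeriv f z) z ∧ f z = f c * exp (g z) := by
  obtain ⟨g, hgc, hg⟩ := ((hf.deriv isOpen_ball).div hf hne).isExactOn_ball.with_val_at c 0
  refine ⟨g, hgc, fun z hz => ⟨hg z hz, ?_⟩⟩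
  have hderiv : ∀ w ∈ ball c R, HasDerivAt (fun w => f w * exp (-g w)) 0 w := by
    intro w hw
    refine (((hf.differentiableAt (isOpen_ball.mem_nhds hw)).hasDerivAt).mul
      (hg w hw).neg.cexp).congr_deriv ?_
    have := hne w hw
    simp only [Pi.div_apply]
    field_simp
    ring
  have hconst := isOpen_ball.is_const_of_deriv_eq_zero (convex_ball c R).isPreconnected
    (fun w hw => (hderiv w hw).differentiableAt.differentiableWithinAt)
    (fun w hw => (hderiv w hw).deriv) hz (mem_ball_self hR)
  simp only [hgc, neg_zero, exp_zero, mul_one] at hconst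
  rw [← hconst, mul_assoc, ← exp_add, neg_add_cancel, exp_zero, mul_one]

/-- By Borel–Carathéodory a holomorphic logarithm of `f / f c` is controlled by an upper bound for
its real part `log ‖f / f c‖`; Cauchy's estimate then controls its derivative. -/
lemma norm_logDeriv_le_of_norm_le_mul (hf : DifferentiableOn ℂ f (ball c R))
    (hne : ∀ z ∈ ball c R, f z ≠ 0) {M : ℝ} (hM : 1 < M)
    (hbound : ∀ z ∈ ball c R, ‖f z‖ ≤ M * ‖f c‖) {s : ℂ} (hs : s ∈ ball c R) :
    ‖logDeriv f s‖ ≤ 8 * R * Real.log M / (R - ‖s - c‖) ^ 2 := by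
  have hR : 0 < R := pos_of_mem_ball hs
  obtain ⟨g, hgc, hg⟩ := exists_hasDerivAt_logDeriv_and_eq_mul_exp hR hf hne
  have hre : ∀ z ∈ ball c R, (g z).re ≤ Real.log M := by
    intro z hz
    have h := hbound z hz
    rw [(hg z hz).2, norm_mul, norm_exp, mul_comm] at h
    exact (Real.le_log_iff_exp_le (one_pos.trans hM)).2
      (le_of_mul_le_mul_right h (norm_pos_iff.2 (hne c (mem_ball_self hR))))
  set d : ℝ := R - ‖s - c‖
  have hd : 0 < d := sub_pos.2 (mem_ball_iff_norm.1 hs)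
  have hsub : ∀ z, ‖z - s‖ ≤ d / 2 → ‖z - c‖ ≤ R - d / 2 := by
    intro z hz
    linarith [norm_sub_le_norm_sub_add_norm_sub z s c]
  have hgbound : ∀ z, ‖z - s‖ ≤ d / 2 → ‖g z‖ ≤ 2 * Real.log M * R / (d / 2) := by
    intro z hz
    have hball : ∀ w ∈ ball (0 : ℂ) R, c + w ∈ ball c R := by simp
    have hlog : 0 < Real.log M := Real.log_pos hM
    have hBC := borelCaratheodory_zero (f := fun w => g (c + w)) (z := z - c) hlog
      (fun w hw => (((hg _ (hball w hw)).1.comp_const_add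
        c w).differentiableAt).differentiableWithinAt)
      (fun w hw => hre _ (hball w hw)) hR (mem_ball_zero_iff.2 (by linarith [hsub z hz]))
      (by simpa using hgc)
    rw [add_sub_cancel] at hBC
    refine hBC.trans ?_
    gcongr <;> linarith [hsub z hz]
  have hcauchy := norm_deriv_le_of_forall_mem_sphere_norm_le (half_pos hd)
    (DifferentiableOn.diffContOnCl fun z hz => ?_)
    fun z hz => hgbound z (mem_sphere_iff_norm.1 hz).le
  · rw [(hg s hs).1.deriv] at hcauchy
    exact hcauchy.trans_eq (by field_simp; ring)
  · rw [closure_ball _ (half_pos hd).ne', mem_closedBall_iff_norm] at hz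
    have hzR : z ∈ ball c R := mem_ball_iff_norm.2 (by linarith [hsub z hz])
    exact (hg z hzR).1.differentiableAt.differentiableWithinAt

end LogDeriv

section ZeroFreeHalfPlane

open Metric

lemma norm_le_of_mem_ball_two_add_mul_I {t R : ℝ} {z : ℂ} (hR : R ≤ 2)
    (hz : z ∈ ball (2 + t * Complex.I) R) : 1 + ‖z‖ ≤ 5 * (1 + |t|) := by
  have hcentre : ‖(2 : ℂ) + t * Complex.I‖ ≤ 2 + |t| := by
    simpa using norm_add_le (2 : ℂ) (t * Complex.I)
  linarith [norm_le_norm_sub_add z (2 + t * Complex.I), mem_ball_iff_norm.1 hz, abs_nonneg t]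

lemma lt_re_of_mem_ball_two_add_mul_I {t σ₀ : ℝ} {z : ℂ}
    (hz : z ∈ ball (2 + t * Complex.I) (2 - σ₀)) : σ₀ < z.re := by
  have h := (Complex.abs_re_le_norm _).trans_lt (mem_ball_iff_norm.1 hz)
  have hre : (z - (2 + t * Complex.I)).re = z.re - 2 := by simp
  rw [hre, abs_lt] at h
  linarith

lemma exists_norm_riemannZeta₁_le_mul {σ₀ : ℝ} (hσ₀ : 0 < σ₀) :
    ∃ A > 1, ∀ t : ℝ, ∀ z ∈ ball (2 + t * Complex.I) (2 - σ₀),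
      ‖riemannZeta₁ z‖ ≤ A * (1 + |t|) ^ 2 * ‖riemannZeta₁ (2 + t * Complex.I)‖ := by
  obtain ⟨m, hm, hlow⟩ := exists_le_norm_riemannZeta one_lt_two
  refine ⟨1 + (1 + 1 / σ₀) * 25 / m, lt_add_of_pos_right _ (by positivity), fun t z hz => ?_⟩
  set c : ℂ := 2 + t * Complex.I with hc
  have hcre : c.re = 2 := by simp [hc]
  have hcentre : m ≤ ‖riemannZeta₁ c‖ := by
    rw [riemannZeta₁_eq_sub_mul (by intro h; simp [h] at hcre), norm_mul]
    have h1 : 1 ≤ ‖c - 1‖ := by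
      refine le_trans ?_ (Complex.re_le_norm (c - 1))
      simp [hcre]; norm_num
    exact (hlow c hcre.ge).trans (le_mul_of_one_le_left (norm_nonneg _) h1)
  calc ‖riemannZeta₁ z‖ ≤ (1 + 1 / σ₀) * (1 + ‖z‖) ^ 2 :=
        norm_riemannZeta₁_le hσ₀ (lt_re_of_mem_ball_two_add_mul_I hz).le
    _ ≤ (1 + 1 / σ₀) * (5 * (1 + |t|)) ^ 2 := by
        gcongr
        exact norm_le_of_mem_ball_two_add_mul_I (by linarith) hz
    _ = (1 + 1 / σ₀) * 25 / m * (1 + |t|) ^ 2 * m := by field_simp; ring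
    _ ≤ (1 + (1 + 1 / σ₀) * 25 / m) * (1 + |t|) ^ 2 * ‖riemannZeta₁ c‖ := by
        gcongr
        linarith

lemma exists_norm_logDeriv_riemannZeta₁_le {σ₀ σ₁ : ℝ} (hσ₀ : 0 < σ₀) (hσ₁ : σ₀ < σ₁)
    (hζ : ∀ s : ℂ, σ₀ < s.re → riemannZeta s ≠ 0) :
    ∃ C, ∀ s : ℂ, σ₁ ≤ s.re → s.re ≤ 2 →
      ‖logDeriv riemannZeta₁ s‖ ≤ C * (1 + Real.log (1 + |s.im|)) := by
  obtain ⟨A, hA, hbound⟩ := exists_norm_riemannZeta₁_le_mul hσ₀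
  refine ⟨8 * (2 - σ₀) * (Real.log A + 2) / (σ₁ - σ₀) ^ 2, fun s hs₁ hs₂ => ?_⟩
  set c : ℂ := 2 + s.im * Complex.I with hc
  have hdist : ‖s - c‖ = 2 - s.re := by
    have : s - c = -((2 - s.re : ℝ) : ℂ) := by
      apply Complex.ext <;> simp [hc]
    rw [this, norm_neg, Complex.norm_of_nonneg (by linarith)]
  have him : 0 ≤ |s.im| := abs_nonneg _
  have hlogA : 0 < Real.log A := Real.log_pos hA
  have hlog : 0 ≤ Real.log (1 + |s.im|) := Real.log_nonneg (by linarith)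
  have hlogM : Real.log (A * (1 + |s.im|) ^ 2) ≤
      (Real.log A + 2) * (1 + Real.log (1 + |s.im|)) := by
    rw [Real.log_mul (by positivity) (by positivity), Real.log_pow]
    push_cast
    nlinarith
  have h := norm_logDeriv_le_of_norm_le_mul (s := s) (c := c) (R := 2 - σ₀)
    differentiable_riemannZeta₁.differentiableOn
    (fun z hz => riemannZeta₁_ne_zero (hζ z (lt_re_of_mem_ball_two_add_mul_I hz)))
    (one_lt_mul_of_lt_of_le hA (one_le_pow₀ (by linarith))) (hbound s.im)
    (mem_ball_iff_norm.2 (by linarith))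
  rw [hdist, sub_sub_sub_cancel_left] at h
  refine h.trans ?_
  rw [div_mul_eq_mul_div, mul_assoc _ (Real.log A + 2)]
  have : 0 ≤ 2 - σ₀ := by linarith
  have : 0 < σ₁ - σ₀ := by linarith
  gcongr

end ZeroFreeHalfPlane

section VerticalLines

open MeasureTheory

lemma norm_inv_le_of_le_re {s : ℂ} {c : ℝ} (hc : 0 < c) (hs : c ≤ s.re) :
    ‖s⁻¹‖ ≤ (1 + 1 / c) * (1 + |s.im|)⁻¹ := by
  have hre : c ≤ ‖s‖ := hs.trans (Complex.re_le_norm s)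
  have hone : 1 ≤ 1 / c * ‖s‖ := by rwa [one_div_mul_eq_div, one_le_div hc]
  rw [norm_inv, inv_le_iff_one_le_mul₀ (hc.trans_le hre), ← div_eq_mul_inv, div_mul_eq_mul_div,
    one_le_div (by positivity)]
  linarith [Complex.abs_im_le_norm s]

lemma verticalIntegrable_of_norm_le {f : ℂ → ℂ} {σ C r : ℝ} (hr : 1 < r)
    (hf : Continuous fun t : ℝ => f (σ + t * Complex.I))
    (hbound : ∀ t : ℝ, ‖f (σ + t * Complex.I)‖ ≤ C * (1 + |t|) ^ (-r)) :
    Complex.VerticalIntegrable f σ :=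
  ((integrable_one_add_norm (E := ℝ) (r := r) (by simpa using hr)).const_mul C).mono'
    hf.aestronglyMeasurable (ae_of_all _ hbound)

variable {f : ℂ → ℂ} {a b C r : ℝ}

lemma verticalIntegrable_of_strip {σ : ℝ} (hσ : σ ∈ Set.Icc a b) (hr : 1 < r)
    (hf : DifferentiableOn ℂ f {s | a ≤ s.re ∧ s.re ≤ b})
    (hbound : ∀ s : ℂ, a ≤ s.re → s.re ≤ b → ‖f s‖ ≤ C * (1 + |s.im|) ^ (-r)) :
    Complex.VerticalIntegrable f σ := by
  refine verticalIntegrable_of_norm_le (C := C) hr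
    (hf.continuousOn.comp_continuous (by fun_prop) fun t => by simpa using hσ) fun t => ?_
  simpa using hbound (σ + t * Complex.I) (by simpa using hσ.1) (by simpa using hσ.2)

lemma tendsto_integral_horizontal (hab : a ≤ b) (hr : 1 < r)
    (hbound : ∀ s : ℂ, a ≤ s.re → s.re ≤ b → ‖f s‖ ≤ C * (1 + |s.im|) ^ (-r))
    {τ : ℝ → ℝ} (hτ : ∀ T, |τ T| = |T|) :
    Tendsto (fun T : ℝ => ∫ x in a..b, f (x + (τ T : ℝ) * Complex.I)) atTop (nhds 0) := by
  have hdecay : Tendsto (fun T : ℝ => C * (1 + T) ^ (-r) * |b - a|) atTop (nhds 0) := by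
    have := (tendsto_rpow_neg_atTop (one_pos.trans hr)).comp
      (tendsto_atTop_add_const_left _ 1 tendsto_id)
    simpa using (this.const_mul C).mul_const |b - a|
  refine squeeze_zero_norm' ?_ hdecay
  filter_upwards [eventually_ge_atTop 0] with T hT
  refine intervalIntegral.norm_integral_le_of_norm_le_const fun x hx => ?_
  rw [Set.uIoc_of_le hab] at hx
  simpa [hτ, abs_of_nonneg hT] using
    hbound (x + (τ T : ℝ) * Complex.I) (by simpa using hx.1.le) (by simpa using hx.2)

lemma integral_vertical_eq_integral_vertical (hab : a ≤ b) (hr : 1 < r)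
    (hf : DifferentiableOn ℂ f {s | a ≤ s.re ∧ s.re ≤ b})
    (hbound : ∀ s : ℂ, a ≤ s.re → s.re ≤ b → ‖f s‖ ≤ C * (1 + |s.im|) ^ (-r)) :
    ∫ t : ℝ, f (a + t * Complex.I) = ∫ t : ℝ, f (b + t * Complex.I) := by
  have hline {σ : ℝ} (hσ : σ ∈ Set.Icc a b) : Tendsto
      (fun T : ℝ => ∫ t in (-T)..T, f (σ + t * Complex.I)) atTop
      (nhds (∫ t : ℝ, f (σ + t * Complex.I))) :=
    intervalIntegral_tendsto_integral (verticalIntegrable_of_strip hσ hr hf hbound)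
      tendsto_neg_atTop_atBot tendsto_id
  have hlim := (((tendsto_integral_horizontal hab hr hbound abs_neg).sub
    (tendsto_integral_horizontal hab hr hbound fun _ => rfl)).add
    ((hline (Set.right_mem_Icc.2 hab)).const_smul Complex.I)).sub
    ((hline (Set.left_mem_Icc.2 hab)).const_smul Complex.I)
  have hrect (T : ℝ) : (∫ x in a..b, f (x + ((-T : ℝ) : ℂ) * Complex.I)) -
      (∫ x in a..b, f (x + (T : ℂ) * Complex.I)) +
      Complex.I • (∫ y in (-T)..T, f (b + y * Complex.I)) -
      Complex.I • ∫ y in (-T)..T, f (a + y * Complex.I) = 0 := by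
    refine Complex.integral_boundary_rect_eq_zero_of_differentiableOn f ⟨a, -T⟩ ⟨b, T⟩
      (hf.mono fun z hz => ?_)
    simpa [Set.uIcc_of_le hab] using (Complex.mem_reProdIm.1 hz).1
  have hzero := tendsto_nhds_unique (hlim.congr hrect) tendsto_const_nhds
  rw [sub_zero, zero_add, ← smul_sub, smul_eq_zero_iff_right Complex.I_ne_zero,
    sub_eq_zero] at hzero
  exact hzero.symm

lemma norm_ofReal_cpow_neg_le_max {u : ℝ} (hu : 0 < u) {s : ℂ} (ha : a ≤ s.re) (hb : s.re ≤ b) :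
    ‖(u : ℂ) ^ (-s)‖ ≤ max (u ^ (-a)) (u ^ (-b)) := by
  rw [Complex.norm_cpow_eq_rpow_re_of_pos hu, Complex.neg_re, le_max_iff]
  rcases le_total u 1 with h | h
  · exact .inr (Real.rpow_le_rpow_of_exponent_ge hu h (neg_le_neg hb))
  · exact .inl (Real.rpow_le_rpow_of_exponent_le h (neg_le_neg ha))

lemma mellinInv_eq_mellinInv_of_strip (hab : a ≤ b) (hr : 1 < r)
    (hf : DifferentiableOn ℂ f {s | a ≤ s.re ∧ s.re ≤ b})
    (hbound : ∀ s : ℂ, a ≤ s.re → s.re ≤ b → ‖f s‖ ≤ C * (1 + |s.im|) ^ (-r))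
    {u : ℝ} (hu : 0 < u) : mellinInv a f u = mellinInv b f u := by
  have hdiff : DifferentiableOn ℂ (fun s => (u : ℂ) ^ (-s) • f s) {s | a ≤ s.re ∧ s.re ≤ b} :=
    (differentiable_id.neg.const_cpow (.inl (by exact_mod_cast hu.ne'))).differentiableOn.smul hf
  rw [mellinInv, mellinInv, integral_vertical_eq_integral_vertical
    (C := max (u ^ (-a)) (u ^ (-b)) * C) hab hr hdiff fun s ha hb => ?_]
  rw [norm_smul, mul_assoc]
  gcongr
  · exact norm_ofReal_cpow_neg_le_max hu ha hb
  · exact hbound s ha hb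

end VerticalLines

section RieszPerron

open MeasureTheory Set

lemma norm_one_div_mul_add_one_le {s : ℂ} {c : ℝ} (hc : 0 < c) (hs : c ≤ s.re) :
    ‖1 / (s * (s + 1))‖ ≤ (1 + 1 / c) ^ 2 * (1 + |s.im|) ^ (-2 : ℝ) := by
  have hs1 := norm_inv_le_of_le_re (s := s + 1) hc (by simp; linarith)
  rw [Complex.add_im, Complex.one_im, add_zero] at hs1
  rw [one_div, mul_inv, norm_mul, Real.rpow_neg (by positivity), Real.rpow_two, ← inv_pow,
    ← mul_pow, sq]
  gcongr
  exact norm_inv_le_of_le_re hc hs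

lemma ne_zero_of_re_pos {s : ℂ} (hs : 0 < s.re) : s ≠ 0 := by
  rintro rfl
  simp at hs

lemma add_one_ne_zero_of_re_pos {s : ℂ} (hs : 0 < s.re) : s + 1 ≠ 0 :=
  ne_zero_of_re_pos (by rw [Complex.add_re, Complex.one_re]; positivity)

lemma verticalIntegrable_one_div_mul_add_one {c : ℝ} (hc : 0 < c) :
    Complex.VerticalIntegrable (fun s => 1 / (s * (s + 1))) c := by
  refine verticalIntegrable_of_norm_le (C := (1 + 1 / c) ^ 2) one_lt_two ?_ fun t => ?_
  · refine continuous_const.div (by fun_prop) fun t => mul_ne_zero (ne_zero_of_re_pos ?_)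
      (add_one_ne_zero_of_re_pos ?_) <;> simpa using hc
  · simpa using norm_one_div_mul_add_one_le (s := c + t * Complex.I) hc (by simp)

lemma hasMellin_max_zero_one_sub {s : ℂ} (hs : 0 < s.re) :
    HasMellin (fun u : ℝ => ((max 0 (1 - u) : ℝ) : ℂ)) s (1 / (s * (s + 1))) := by
  have h₁ := hasMellin_one_Ioc hs
  have h₂ := hasMellin_cpow_Ioc 1 (s := s) (by simp; linarith)
  have hEq : EqOn (fun u : ℝ => indicator (Ioc 0 1) (fun _ => (1 : ℂ)) u -
      indicator (Ioc 0 1) (fun u : ℝ => (u : ℂ) ^ (1 : ℂ)) u)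
      (fun u : ℝ => ((max 0 (1 - u) : ℝ) : ℂ)) (Ioi 0) := by
    intro u (hu : 0 < u)
    rcases le_or_gt u 1 with h | h
    · simp [indicator_of_mem (show u ∈ Ioc 0 1 from ⟨hu, h⟩), max_eq_right (sub_nonneg.2 h)]
    · simp [indicator_of_notMem (fun hmem : u ∈ Ioc 0 1 => h.not_ge hmem.2),
        max_eq_left (sub_nonpos.2 h.le)]
  have hsub := hasMellin_sub h₁.1 h₂.1
  have hval : 1 / s - 1 / (s + 1) = 1 / (s * (s + 1)) := by
    field_simp [ne_zero_of_re_pos hs, add_one_ne_zero_of_re_pos hs]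
    ring
  rw [h₁.2, h₂.2, hval] at hsub
  refine ⟨hsub.1.congr_fun (fun u hu => congrArg ((u : ℂ) ^ (s - 1) • ·) (hEq hu))
    measurableSet_Ioi, ?_⟩
  rw [← hsub.2]
  exact setIntegral_congr_fun measurableSet_Ioi fun u hu =>
    congrArg ((u : ℂ) ^ (s - 1) • ·) (hEq hu).symm

lemma mellinInv_one_div_mul_add_one {c u : ℝ} (hc : 0 < c) (hu : 0 < u) :
    mellinInv c (fun s => 1 / (s * (s + 1))) u = ((max 0 (1 - u) : ℝ) : ℂ) := by
  have hmellin (t : ℝ) : mellin (fun u : ℝ => ((max 0 (1 - u) : ℝ) : ℂ)) (c + t * Complex.I) =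
      1 / ((c + t * Complex.I) * (c + t * Complex.I + 1)) :=
    (hasMellin_max_zero_one_sub (by simpa using hc)).2
  have hinv := mellinInv_mellin_eq c (fun u : ℝ => ((max 0 (1 - u) : ℝ) : ℂ)) hu
    (hasMellin_max_zero_one_sub (by simpa using hc)).1
    ((verticalIntegrable_one_div_mul_add_one hc).congr (ae_of_all _ fun t => (hmellin t).symm))
    (by fun_prop)
  simp only [mellinInv, hmellin] at hinv
  exact hinv

lemma LSeries_term_continuous_vertical (a : ℕ → ℂ) (n : ℕ) (c : ℝ) :
    Continuous fun t : ℝ => LSeries.term a (c + t * Complex.I) n := by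
  rcases eq_or_ne n 0 with rfl | hn
  · simpa using continuous_const
  · have hn' : (n : ℂ) ≠ 0 := Nat.cast_ne_zero.2 hn
    simp only [LSeries.term_of_ne_zero hn]
    exact continuous_const.div (Continuous.const_cpow (by fun_prop) (.inl hn')) fun t => by
      simp [Complex.cpow_eq_zero_iff, hn']

lemma mellinInv_LSeries_term (a : ℕ → ℂ) {n : ℕ} (hn : n ≠ 0) {c u : ℝ} (hc : 0 < c) (hu : 0 < u) :
    mellinInv c (fun s => LSeries.term a s n * (1 / (s * (s + 1)))) u =
      a n * ((max 0 (1 - n * u) : ℝ) : ℂ) := by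
  have hn0 : (0 : ℝ) < n := Nat.cast_pos.2 (Nat.pos_of_ne_zero hn)
  have hscale (s : ℂ) : (u : ℂ) ^ (-s) • (LSeries.term a s n * (1 / (s * (s + 1)))) =
      a n * (((n * u : ℝ) : ℂ) ^ (-s) • (1 / (s * (s + 1)))) := by
    rw [LSeries.term_of_ne_zero hn, Complex.ofReal_mul, Complex.mul_cpow_ofReal_nonneg hn0.le hu.le,
      Complex.ofReal_natCast, Complex.cpow_neg (n : ℂ), smul_eq_mul, smul_eq_mul]
    ring
  rw [← mellinInv_one_div_mul_add_one hc (mul_pos hn0 hu), mellinInv, mellinInv]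
  simp_rw [hscale, integral_const_mul, mul_smul_comm]

lemma hasSum_mul_max_mellinInv_LSeries {a : ℕ → ℂ} (ha : a 0 = 0) {c u : ℝ} (hc : 0 < c)
    (hu : 0 < u) (hsum : LSeriesSummable a c) :
    HasSum (fun n : ℕ => a n * ((max 0 (1 - n * u) : ℝ) : ℂ))
      (mellinInv c (fun s => LSeries a s * (1 / (s * (s + 1)))) u) := by
  set k : ℝ → ℂ := fun t => 1 / ((c + t * Complex.I) * (c + t * Complex.I + 1))
  have hk : Integrable k := verticalIntegrable_one_div_mul_add_one hc
  set F : ℕ → ℝ → ℂ := fun n t =>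
    (u : ℂ) ^ (-(c + t * Complex.I)) • (LSeries.term a (c + t * Complex.I) n * k t) with hF
  have hnorm (n : ℕ) (t : ℝ) : ‖F n t‖ = u ^ (-c) * ‖LSeries.term a c n‖ * ‖k t‖ := by
    rw [norm_smul, norm_mul, Complex.norm_cpow_eq_rpow_re_of_pos hu, LSeries.norm_term_eq,
      LSeries.norm_term_eq]
    simp [mul_assoc]
  have hmeas (n : ℕ) : AEStronglyMeasurable (F n) :=
    (Continuous.aestronglyMeasurable ((by fun_prop : Continuous fun t : ℝ =>
      -(c + t * Complex.I)).const_cpow (.inl (by exact_mod_cast hu.ne')))).smul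
      ((LSeries_term_continuous_vertical a n c).aestronglyMeasurable.mul hk.1)
  have hint (n : ℕ) : Integrable (F n) :=
    (hk.norm.const_mul _).mono' (hmeas n) (ae_of_all _ fun t => (hnorm n t).le)
  have hsummable : Summable fun n => ∫ t, ‖F n t‖ := by
    simp_rw [hnorm, integral_const_mul]
    exact (hsum.norm.mul_left _).mul_right _
  have hmain := (hasSum_integral_of_summable_integral_norm hint hsummable).const_smul
    (1 / (2 * Real.pi))
  simp only [hF, smul_eq_mul, tsum_mul_left, tsum_mul_right] at hmain
  refine hmain.congr_fun fun n => ?_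
  rcases eq_or_ne n 0 with rfl | hn
  · simp [ha]
  · exact (mellinInv_LSeries_term a hn hc hu).symm

end RieszPerron

section PsiOne

open MeasureTheory Set
open scoped ArithmeticFunction

/-- The integral `∫₀ˣ ψ` of Chebyshev's function, written as the Riesz mean
`∑_{n ≤ x} (x - n) Λ(n)`; unlike `ψ`, it has an absolutely convergent Perron formula. -/
noncomputable def psiOne (x : ℝ) : ℝ :=
  ∑ n ∈ Finset.Ioc 0 ⌊x⌋₊, Λ n * (x - n)

lemma psiOne_add_one_sub_psiOne {x : ℝ} (hx : 0 ≤ x) :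
    psiOne (x + 1) - psiOne x = Chebyshev.psi x + Λ (⌊x⌋₊ + 1) * (x - ⌊x⌋₊) := by
  rw [psiOne, Nat.floor_add_one hx, Finset.sum_Ioc_succ_top (Nat.zero_le _), psiOne,
    Chebyshev.psi, add_sub_right_comm, ← Finset.sum_sub_distrib]
  push_cast
  congr 1
  · exact Finset.sum_congr rfl fun n _ => by ring
  · ring

lemma psi_le_psiOne_add_one_sub_psiOne {x : ℝ} (hx : 0 ≤ x) :
    Chebyshev.psi x ≤ psiOne (x + 1) - psiOne x := by
  rw [psiOne_add_one_sub_psiOne hx, le_add_iff_nonneg_right]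
  exact mul_nonneg ArithmeticFunction.vonMangoldt_nonneg (sub_nonneg.2 (Nat.floor_le hx))

lemma psiOne_add_one_sub_psiOne_le_psi {x : ℝ} (hx : 0 ≤ x) :
    psiOne (x + 1) - psiOne x ≤ Chebyshev.psi (x + 1) := by
  rw [psiOne_add_one_sub_psiOne hx, Chebyshev.psi, Chebyshev.psi, Nat.floor_add_one hx,
    Finset.sum_Ioc_succ_top (Nat.zero_le _), add_le_add_iff_left]
  refine mul_le_of_le_one_right ArithmeticFunction.vonMangoldt_nonneg ?_
  linarith [Nat.lt_floor_add_one x]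

lemma psiOne_div_eq_mellinInv {c x : ℝ} (hc : 1 < c) (hx : 0 < x) :
    ((psiOne x / x : ℝ) : ℂ) =
      mellinInv c (fun s => LSeries (fun n => (Λ n : ℂ)) s * (1 / (s * (s + 1)))) x⁻¹ := by
  have hmax (n : ℕ) : (Λ n : ℂ) * ((max 0 (1 - n * x⁻¹) : ℝ) : ℂ) =
      ((Λ n * (max 0 (x - n) / x) : ℝ) : ℂ) := by
    rw [← Complex.ofReal_mul, ← max_div_div_right hx.le, zero_div, sub_div, div_self hx.ne',
      div_eq_mul_inv (n : ℝ)]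
  have hzero : ∀ n ∉ Finset.Ioc 0 ⌊x⌋₊, ((Λ n * (max 0 (x - n) / x) : ℝ) : ℂ) = 0 := by
    intro n hn
    rcases n.eq_zero_or_pos with rfl | hpos
    · simp
    · have hxn : x < n := (Nat.floor_lt hx.le).1 (by simpa [hpos] using hn)
      simp [max_eq_left (sub_nonpos.2 hxn.le)]
  have hperron := hasSum_mul_max_mellinInv_LSeries (a := fun n => (Λ n : ℂ)) (by simp)
    (one_pos.trans hc) (inv_pos.2 hx)
    (ArithmeticFunction.LSeriesSummable_vonMangoldt (by simpa using hc))
  simp_rw [hmax] at hperron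
  rw [hperron.unique (hasSum_sum_of_ne_finset_zero hzero), psiOne, Finset.sum_div,
    Complex.ofReal_sum]
  refine Finset.sum_congr rfl fun n hn => ?_
  have hnx : (n : ℝ) ≤ x := (Nat.le_floor_iff hx.le).1 (Finset.mem_Ioc.1 hn).2
  rw [max_eq_right (sub_nonneg.2 hnx), mul_div_assoc]

/-- The Mellin transform of the error term `(ψ₁(x) - x(x - 1)/2)/x` as a function of `x⁻¹`.
Since `1/(s - 1) + 1/2 = (s + 1)/(2(s - 1))`, the constant `1/2` accounts for the main term
`x(x - 1)/2` exactly. -/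
noncomputable def psiOneErrorTransform (s : ℂ) : ℂ :=
  (-logDeriv riemannZeta₁ s - 1 / 2) * (1 / (s * (s + 1)))

lemma logDeriv_riemannZeta₁_eq {s : ℂ} (hs : 1 < s.re) :
    logDeriv riemannZeta₁ s = 1 / (s - 1) - LSeries (fun n => (Λ n : ℂ)) s := by
  have h1 : s ≠ 1 := by rintro rfl; simp at hs
  have hev : riemannZeta₁ =ᶠ[nhds s] fun z => (z - 1) * riemannZeta z :=
    (isOpen_ne.eventually_mem h1).mono fun _ hz => riemannZeta₁_eq_sub_mul hz
  rw [logDeriv_apply, hev.deriv_eq, hev.eq_of_nhds, ← logDeriv_apply,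
    logDeriv_mul (f := (· - 1)) s (sub_ne_zero.2 h1) (riemannZeta_ne_zero_of_one_le_re hs.le)
      (by fun_prop) (differentiableAt_riemannZeta h1),
    ArithmeticFunction.LSeries_vonMangoldt_eq_deriv_riemannZeta_div hs, neg_div, sub_neg_eq_add]
  simp [logDeriv_apply]

lemma psiOneErrorTransform_eq {s : ℂ} (hs : 1 < s.re) :
    LSeries (fun n => (Λ n : ℂ)) s * (1 / (s * (s + 1))) =
      psiOneErrorTransform s + 1 / 2 * (1 / ((s - 1) * (s - 1 + 1))) := by
  have h0 : s ≠ 0 := ne_zero_of_re_pos (one_pos.trans hs)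
  have h1 : s - 1 ≠ 0 := ne_zero_of_re_pos (by simpa using hs)
  have h2 : s + 1 ≠ 0 := add_one_ne_zero_of_re_pos (one_pos.trans hs)
  rw [psiOneErrorTransform, logDeriv_riemannZeta₁_eq hs, sub_add_cancel]
  field_simp
  ring

lemma differentiableAt_psiOneErrorTransform {s : ℂ} (hs : 0 < s.re) (hζ : riemannZeta s ≠ 0) :
    DifferentiableAt ℂ psiOneErrorTransform s := by
  have hden : s * (s + 1) ≠ 0 := mul_ne_zero (ne_zero_of_re_pos hs) (add_one_ne_zero_of_re_pos hs)
  have hlog : DifferentiableAt ℂ (logDeriv riemannZeta₁) s :=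
    (differentiable_riemannZeta₁.deriv s).div (differentiable_riemannZeta₁ s)
      (riemannZeta₁_ne_zero hζ)
  exact (hlog.neg.sub_const _).mul ((differentiableAt_const 1).div (by fun_prop) hden)

lemma exists_norm_psiOneErrorTransform_le {σ₀ σ₁ ε : ℝ} (hσ₀ : 0 < σ₀) (hσ₁ : σ₀ < σ₁)
    (hζ : ∀ s : ℂ, σ₀ < s.re → riemannZeta s ≠ 0) (hε : 0 < ε) :
    ∃ C, 0 ≤ C ∧ ∀ s : ℂ, σ₁ ≤ s.re → s.re ≤ 2 →
      ‖psiOneErrorTransform s‖ ≤ C * (1 + |s.im|) ^ (-(2 - ε)) := by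
  obtain ⟨C, hC⟩ := exists_norm_logDeriv_riemannZeta₁_le hσ₀ hσ₁ hζ
  refine ⟨(|C| * (1 + 1 / ε) + 1 / 2) * (1 + 1 / σ₁) ^ 2, by positivity, fun s hs₁ hs₂ => ?_⟩
  set X := 1 + |s.im|
  have hX1 : 1 ≤ X := le_add_of_nonneg_right (abs_nonneg _)
  have hXε : 1 ≤ X ^ ε := Real.one_le_rpow hX1 hε.le
  have hlog : 1 + Real.log X ≤ (1 + 1 / ε) * X ^ ε := by
    linarith [Real.log_le_rpow_div (zero_le_one.trans hX1) hε, div_eq_mul_one_div (X ^ ε) ε]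
  have hlog0 : 0 ≤ Real.log X := Real.log_nonneg hX1
  have hnum : ‖-logDeriv riemannZeta₁ s - 1 / 2‖ ≤ (|C| * (1 + 1 / ε) + 1 / 2) * X ^ ε := calc
    _ ≤ ‖logDeriv riemannZeta₁ s‖ + 1 / 2 := (norm_sub_le _ _).trans (by simp)
    _ ≤ |C| * (1 + Real.log X) + 1 / 2 := by
      gcongr
      exact (hC s hs₁ hs₂).trans (by gcongr; exact le_abs_self C)
    _ ≤ |C| * ((1 + 1 / ε) * X ^ ε) + 1 / 2 * X ^ ε := by gcongr; linarith
    _ = _ := by ring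
  calc ‖psiOneErrorTransform s‖
      ≤ (|C| * (1 + 1 / ε) + 1 / 2) * X ^ ε * ((1 + 1 / σ₁) ^ 2 * X ^ (-2 : ℝ)) := by
        rw [psiOneErrorTransform, norm_mul]
        gcongr
        exact norm_one_div_mul_add_one_le (hσ₀.trans hσ₁) hs₁
    _ = _ := by
        rw [neg_sub, sub_eq_add_neg ε, Real.rpow_add (one_pos.trans_le hX1)]
        ring

lemma verticalIntegrable_psiOneErrorTransform {σ₀ σ : ℝ} (hσ₀ : 0 < σ₀) (hσ : σ₀ < σ)
    (hσ₂ : σ ≤ 2) (hζ : ∀ s : ℂ, σ₀ < s.re → riemannZeta s ≠ 0) :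
    Complex.VerticalIntegrable psiOneErrorTransform σ := by
  obtain ⟨C, -, hC⟩ := exists_norm_psiOneErrorTransform_le hσ₀ hσ hζ one_half_pos
  refine verticalIntegrable_of_strip (a := σ) (b := 2) ⟨le_rfl, hσ₂⟩ (by norm_num)
    (fun s hs => ?_) hC
  exact (differentiableAt_psiOneErrorTransform (hσ₀.trans (hσ.trans_le hs.1))
    (hζ s (hσ.trans_le hs.1))).differentiableWithinAt

end PsiOne

section Chebyshev

open MeasureTheory Set
open scoped ArithmeticFunction

lemma mellinInv_comp_sub_one (f : ℂ → ℂ) (c : ℝ) {u : ℝ} (hu : 0 < u) :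
    mellinInv c (fun s => f (s - 1)) u = (u : ℂ)⁻¹ * mellinInv (c - 1) f u := by
  have hu0 : (u : ℂ) ≠ 0 := by exact_mod_cast hu.ne'
  rw [mellinInv, mellinInv, mul_smul_comm, ← integral_const_mul]
  congr 2 with t
  rw [Complex.ofReal_sub, Complex.ofReal_one, sub_add_eq_add_sub, smul_eq_mul, smul_eq_mul,
    ← mul_assoc, ← Complex.cpow_neg_one, ← Complex.cpow_add _ _ hu0]
  ring_nf

lemma integrable_cpow_smul_of_verticalIntegrable {f : ℂ → ℂ} {c u : ℝ} (hu : 0 < u)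
    (hf : Complex.VerticalIntegrable f c) :
    Integrable fun t : ℝ => (u : ℂ) ^ (-(c + t * Complex.I)) • f (c + t * Complex.I) := by
  have hcont : Continuous fun t : ℝ => (u : ℂ) ^ (-(c + t * Complex.I)) :=
    Continuous.const_cpow (by fun_prop) (.inl (by exact_mod_cast hu.ne'))
  refine Integrable.bdd_smul hf (u ^ (-c)) hcont.aestronglyMeasurable (ae_of_all _ fun t => ?_)
  rw [Complex.norm_cpow_eq_rpow_re_of_pos hu]
  simp

lemma mellinInv_const_mul (a : ℂ) (f : ℂ → ℂ) (c u : ℝ) :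
    mellinInv c (fun s => a * f s) u = a * mellinInv c f u := by
  rw [mellinInv, mellinInv, mul_smul_comm, ← integral_const_mul]
  simp only [mul_smul_comm]

lemma mellinInv_add {f g : ℂ → ℂ} {c u : ℝ} (hu : 0 < u) (hf : Complex.VerticalIntegrable f c)
    (hg : Complex.VerticalIntegrable g c) :
    mellinInv c (fun s => f s + g s) u = mellinInv c f u + mellinInv c g u := by
  simp only [mellinInv, smul_add]
  rw [integral_add (integrable_cpow_smul_of_verticalIntegrable hu hf)
    (integrable_cpow_smul_of_verticalIntegrable hu hg), smul_add]

lemma ofReal_mul_inv_cpow_neg_smul {x : ℝ} (hx : 0 < x) (s z : ℂ) :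
    (x : ℂ) * (((x⁻¹ : ℝ) : ℂ) ^ (-s) • z) = (x : ℂ) ^ (s + 1) * z := by
  rw [Complex.cpow_add _ _ (by exact_mod_cast hx.ne'), Complex.cpow_one, Complex.ofReal_inv,
    Complex.inv_cpow _ _ (by simpa [Complex.arg_ofReal_of_nonneg hx.le] using Real.pi_ne_zero.symm),
    Complex.cpow_neg, inv_inv, smul_eq_mul]
  ring

lemma ofReal_mul_mellinInv_inv (f : ℂ → ℂ) (σ : ℝ) {x : ℝ} (hx : 0 < x) :
    (x : ℂ) * mellinInv σ f x⁻¹ = (1 / (2 * Real.pi)) •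
      ∫ t : ℝ, (x : ℂ) ^ (σ + t * Complex.I + 1) * f (σ + t * Complex.I) := by
  simp_rw [← ofReal_mul_inv_cpow_neg_smul hx, integral_const_mul, mellinInv, mul_smul_comm]

variable {σ₀ : ℝ}

lemma mellinInv_psiOneErrorTransform_eq {σ u : ℝ} (hσ₀ : 0 < σ₀) (hσ : σ₀ < σ) (hσ₂ : σ ≤ 2)
    (hζ : ∀ s : ℂ, σ₀ < s.re → riemannZeta s ≠ 0) (hu : 0 < u) :
    mellinInv σ psiOneErrorTransform u = mellinInv 2 psiOneErrorTransform u := by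
  obtain ⟨C, -, hC⟩ := exists_norm_psiOneErrorTransform_le hσ₀ hσ hζ one_half_pos
  refine mellinInv_eq_mellinInv_of_strip hσ₂ (by norm_num) (fun s hs => ?_) hC hu
  have hs₀ : σ₀ < s.re := hσ.trans_le hs.1
  exact (differentiableAt_psiOneErrorTransform (hσ₀.trans hs₀) (hζ s hs₀)).differentiableWithinAt

lemma mellinInv_two_main_term {x : ℝ} (hx : 1 ≤ x) :
    mellinInv 2 (fun s => 1 / 2 * (1 / ((s - 1) * (s - 1 + 1)))) x⁻¹ = (x - 1) / 2 := by
  have hx0 : 0 < x := one_pos.trans_le hx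
  have hu : 0 < x⁻¹ := inv_pos.2 hx0
  have hu1 : 0 ≤ 1 - x⁻¹ := sub_nonneg.2 (inv_le_one_of_one_le₀ hx)
  rw [mellinInv_const_mul, mellinInv_comp_sub_one (fun s => 1 / (s * (s + 1))) 2 hu,
    mellinInv_one_div_mul_add_one (by norm_num) hu, max_eq_right hu1]
  have : (x : ℂ) ≠ 0 := by exact_mod_cast hx0.ne'
  push_cast
  field_simp

lemma psiOne_eq_add_mellinInv {σ x : ℝ} (hσ₀ : 0 < σ₀) (hσ : σ₀ < σ) (hσ₂ : σ ≤ 2)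
    (hζ : ∀ s : ℂ, σ₀ < s.re → riemannZeta s ≠ 0) (hx : 1 ≤ x) :
    (psiOne x : ℂ) = x * (x - 1) / 2 + x * mellinInv σ psiOneErrorTransform x⁻¹ := by
  have hx0 : 0 < x := one_pos.trans_le hx
  have hu : 0 < x⁻¹ := inv_pos.2 hx0
  have hmain : Complex.VerticalIntegrable
      (fun s => 1 / 2 * (1 / ((s - 1) * (s - 1 + 1)))) 2 := by
    refine ((verticalIntegrable_one_div_mul_add_one one_pos).const_mul (1 / 2)).congr
      (ae_of_all _ fun t => ?_)
    have : ((2 : ℝ) : ℂ) + t * Complex.I - 1 = ((1 : ℝ) : ℂ) + t * Complex.I := by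
      push_cast
      ring
    simp only [this]
  have hperron : ((psiOne x / x : ℝ) : ℂ) =
      mellinInv 2 psiOneErrorTransform x⁻¹ + (x - 1) / 2 := by
    rw [psiOne_div_eq_mellinInv one_lt_two hx0, ← mellinInv_two_main_term hx,
      ← mellinInv_add hu (verticalIntegrable_psiOneErrorTransform hσ₀ (hσ.trans_le hσ₂) le_rfl hζ)
      hmain]
    simp only [mellinInv]
    congr 2 with t
    rw [psiOneErrorTransform_eq (by simp)]
  rw [Complex.ofReal_div, div_eq_iff (by exact_mod_cast hx0.ne')] at hperron
  rw [hperron, mellinInv_psiOneErrorTransform_eq hσ₀ hσ hσ₂ hζ hu]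
  ring

lemma norm_cpow_add_one_sub_cpow_le {x : ℝ} (hx : 0 < x) {w : ℂ} (hw : 1 ≤ w.re) :
    ‖((x + 1 : ℝ) : ℂ) ^ w - (x : ℂ) ^ w‖ ≤ ‖w‖ * (x + 1) ^ (w.re - 1) := by
  have hderiv : ∀ u ∈ Icc x (x + 1), HasDerivWithinAt (fun u : ℝ => (u : ℂ) ^ w)
      (w * (u : ℂ) ^ (w - 1)) (Icc x (x + 1)) u := fun u hu =>
    (hasDerivAt_ofReal_cpow_const (hx.trans_le hu.1).ne'
      (ne_zero_of_re_pos (one_pos.trans_le hw))).hasDerivWithinAt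
  have hbound : ∀ u ∈ Icc x (x + 1), ‖w * (u : ℂ) ^ (w - 1)‖ ≤ ‖w‖ * (x + 1) ^ (w.re - 1) := by
    intro u hu
    have hu0 : 0 < u := hx.trans_le hu.1
    rw [norm_mul, Complex.norm_cpow_eq_rpow_re_of_pos hu0, Complex.sub_re, Complex.one_re]
    gcongr
    exact hu.2
  have hx1 : x ≤ x + 1 := le_add_of_nonneg_right zero_le_one
  simpa using Convex.norm_image_sub_le_of_norm_hasDerivWithin_le hderiv hbound (convex_Icc _ _)
    (left_mem_Icc.2 hx1) (right_mem_Icc.2 hx1)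

/-- Interpolates between the mean value theorem (`θ = 0`) and the trivial bound (`θ = 1`). -/
lemma norm_cpow_add_one_sub_cpow_le_interpolation {x θ : ℝ} (hx : 0 < x) {w : ℂ} (hw : 1 ≤ w.re)
    (hθ : θ ∈ Icc 0 1) :
    ‖((x + 1 : ℝ) : ℂ) ^ w - (x : ℂ) ^ w‖ ≤
      2 * ‖w‖ ^ (1 - θ) * (x + 1) ^ (w.re - 1 + θ) := by
  have hx1 : 0 < x + 1 := by linarith
  set v := ‖((x + 1 : ℝ) : ℂ) ^ w - (x : ℂ) ^ w‖
  have htriv : v ≤ 2 * (x + 1) ^ w.re := by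
    refine (norm_sub_le _ _).trans ?_
    rw [Complex.norm_cpow_eq_rpow_re_of_pos hx1, Complex.norm_cpow_eq_rpow_re_of_pos hx, two_mul]
    gcongr
    linarith
  have htwo : (2 : ℝ) ^ θ ≤ 2 := by
    simpa using Real.rpow_le_rpow_of_exponent_le one_le_two hθ.2
  have hexp : w.re - 1 + θ = (w.re - 1) * (1 - θ) + w.re * θ := by ring
  calc v = v ^ (1 - θ) * v ^ θ := by
        rw [← Real.rpow_add_of_nonneg (norm_nonneg _) (sub_nonneg.2 hθ.2) hθ.1, sub_add_cancel,
          Real.rpow_one]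
    _ ≤ (‖w‖ * (x + 1) ^ (w.re - 1)) ^ (1 - θ) * (2 * (x + 1) ^ w.re) ^ θ := by
        gcongr
        · exact sub_nonneg.2 hθ.2
        · exact norm_cpow_add_one_sub_cpow_le hx hw
        · exact hθ.1
    _ = 2 ^ θ * ‖w‖ ^ (1 - θ) * (x + 1) ^ (w.re - 1 + θ) := by
        rw [Real.mul_rpow (norm_nonneg _) (by positivity), Real.mul_rpow two_pos.le (by positivity),
          ← Real.rpow_mul hx1.le, ← Real.rpow_mul hx1.le, hexp, Real.rpow_add hx1]
        ring
    _ ≤ _ := by gcongr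

lemma norm_add_one_le_mul_one_add_abs_im {s : ℂ} (hs : 0 ≤ s.re) (hs₂ : s.re ≤ 2) :
    ‖s + 1‖ ≤ 3 * (1 + |s.im|) := by
  have h := Complex.norm_le_abs_re_add_abs_im (s + 1)
  rw [Complex.add_re, Complex.add_im, Complex.one_re, Complex.one_im, add_zero,
    abs_of_nonneg (by linarith : 0 ≤ s.re + 1)] at h
  linarith [abs_nonneg s.im]

lemma norm_cpow_add_one_sub_cpow_le_of_strip {x θ : ℝ} (hx : 0 < x) {s : ℂ} (hs : 0 ≤ s.re)
    (hs₂ : s.re ≤ 2) (hθ : θ ∈ Icc 0 1) :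
    ‖((x + 1 : ℝ) : ℂ) ^ (s + 1) - (x : ℂ) ^ (s + 1)‖ ≤
      6 * (1 + |s.im|) ^ (1 - θ) * (x + 1) ^ (s.re + θ) := by
  have hθ₁ : 0 ≤ 1 - θ := sub_nonneg.2 hθ.2
  have hthree : (3 : ℝ) ^ (1 - θ) ≤ 3 := by
    simpa using Real.rpow_le_rpow_of_exponent_le (by norm_num : (1 : ℝ) ≤ 3)
      (sub_le_self 1 hθ.1)
  have hre : (s + 1).re = s.re + 1 := by simp
  have h := norm_cpow_add_one_sub_cpow_le_interpolation hx (w := s + 1) (by linarith) hθ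
  rw [hre, add_sub_cancel_right] at h
  calc _ ≤ 2 * ‖s + 1‖ ^ (1 - θ) * (x + 1) ^ (s.re + θ) := h
    _ ≤ 2 * (3 * (1 + |s.im|)) ^ (1 - θ) * (x + 1) ^ (s.re + θ) := by
        gcongr
        exact norm_add_one_le_mul_one_add_abs_im hs hs₂
    _ = 2 * (3 ^ (1 - θ) * (1 + |s.im|) ^ (1 - θ)) * (x + 1) ^ (s.re + θ) := by
        rw [Real.mul_rpow (by norm_num) (by positivity)]
    _ ≤ 2 * (3 * (1 + |s.im|) ^ (1 - θ)) * (x + 1) ^ (s.re + θ) := by gcongr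
    _ = _ := by ring

lemma psiOne_add_one_sub_psiOne_sub_eq_integral {σ x : ℝ} (hσ₀ : 0 < σ₀) (hσ : σ₀ < σ)
    (hσ₂ : σ ≤ 2) (hζ : ∀ s : ℂ, σ₀ < s.re → riemannZeta s ≠ 0) (hx : 1 ≤ x) :
    ((psiOne (x + 1) - psiOne x - x : ℝ) : ℂ) = (1 / (2 * Real.pi)) • ∫ t : ℝ,
      (((x + 1 : ℝ) : ℂ) ^ (σ + t * Complex.I + 1) - (x : ℂ) ^ (σ + t * Complex.I + 1)) *
        psiOneErrorTransform (σ + t * Complex.I) := by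
  have hx0 : 0 < x := one_pos.trans_le hx
  have hint {y : ℝ} (hy : 0 < y) : Integrable fun t : ℝ =>
      (y : ℂ) ^ (σ + t * Complex.I + 1) * psiOneErrorTransform (σ + t * Complex.I) := by
    simp_rw [← ofReal_mul_inv_cpow_neg_smul hy]
    exact (integrable_cpow_smul_of_verticalIntegrable (inv_pos.2 hy)
      (verticalIntegrable_psiOneErrorTransform hσ₀ hσ hσ₂ hζ)).const_mul _
  simp_rw [sub_mul]
  rw [integral_sub (hint (by linarith)) (hint hx0), smul_sub,
    ← ofReal_mul_mellinInv_inv _ _ (by linarith), ← ofReal_mul_mellinInv_inv _ _ hx0]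
  push_cast
  rw [psiOne_eq_add_mellinInv hσ₀ hσ hσ₂ hζ hx,
    psiOne_eq_add_mellinInv hσ₀ hσ hσ₂ hζ (x := x + 1) (by linarith)]
  push_cast
  ring

lemma exists_abs_psiOne_add_one_sub_psiOne_sub_le {β : ℝ} (hσ₀ : 0 < σ₀) (hβ : σ₀ < β)
    (hβ₂ : β ≤ 2) (hζ : ∀ s : ℂ, σ₀ < s.re → riemannZeta s ≠ 0) :
    ∃ K, 0 ≤ K ∧ ∀ x : ℝ, 1 ≤ x → |psiOne (x + 1) - psiOne x - x| ≤ K * (x + 1) ^ β := by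
  obtain ⟨ε, rfl⟩ : ∃ ε, β = σ₀ + 4 * ε := ⟨(β - σ₀) / 4, by ring⟩
  have hε : 0 < ε := by linarith
  have hσ : σ₀ < σ₀ + 2 * ε := by linarith
  have hσ₂ : σ₀ + 2 * ε ≤ 2 := by linarith
  obtain ⟨C, hC0, hC⟩ := exists_norm_psiOneErrorTransform_le hσ₀ hσ hζ hε
  set K := ∫ t : ℝ, 6 * C * (1 + |t|) ^ (-(1 + ε)) with hK
  have hKint : Integrable fun t : ℝ => 6 * C * (1 + |t|) ^ (-(1 + ε)) := by
    simpa using (integrable_one_add_norm (E := ℝ) (r := 1 + ε) (by simpa using hε)).const_mul _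
  refine ⟨1 / (2 * Real.pi) * K, by positivity, fun x hx => ?_⟩
  have hpointwise (t : ℝ) : ‖(((x + 1 : ℝ) : ℂ) ^ (((σ₀ + 2 * ε : ℝ) : ℂ) + t * Complex.I + 1) -
      (x : ℂ) ^ (((σ₀ + 2 * ε : ℝ) : ℂ) + t * Complex.I + 1)) *
        psiOneErrorTransform ((σ₀ + 2 * ε : ℝ) + t * Complex.I)‖ ≤
      6 * C * (1 + |t|) ^ (-(1 + ε)) * (x + 1) ^ (σ₀ + 4 * ε) := by
    set s : ℂ := ((σ₀ + 2 * ε : ℝ) : ℂ) + t * Complex.I with hs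
    have hre : s.re = σ₀ + 2 * ε := by simp [hs]
    have him : s.im = t := by simp [hs]
    have hdiff := norm_cpow_add_one_sub_cpow_le_of_strip (one_pos.trans_le hx) (s := s)
      (by linarith) (by linarith) (θ := 2 * ε) ⟨by linarith, by linarith⟩
    have hexp : -(1 + ε) = 1 - 2 * ε + -(2 - ε) := by ring
    rw [norm_mul, hexp, Real.rpow_add (by positivity)]
    calc _ ≤ 6 * (1 + |s.im|) ^ (1 - 2 * ε) * (x + 1) ^ (s.re + 2 * ε) *
          (C * (1 + |s.im|) ^ (-(2 - ε))) := by
          gcongr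
          exact hC s hre.ge (hre.trans_le hσ₂)
      _ = _ := by
          rw [hre, him, show σ₀ + 2 * ε + 2 * ε = σ₀ + 4 * ε by ring]
          ring
  rw [← Real.norm_eq_abs, ← Complex.norm_real,
    psiOne_add_one_sub_psiOne_sub_eq_integral hσ₀ hσ hσ₂ hζ hx, norm_smul,
    Real.norm_of_nonneg (by positivity), mul_assoc, hK, ← integral_mul_const]
  gcongr
  exact norm_integral_le_of_norm_le (hKint.mul_const _) (ae_of_all _ hpointwise)

lemma exists_abs_psi_sub_le {β : ℝ} (hσ₀ : 0 < σ₀) (hβ : σ₀ < β) (hβ₂ : β ≤ 2)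
    (hζ : ∀ s : ℂ, σ₀ < s.re → riemannZeta s ≠ 0) :
    ∃ K, 0 ≤ K ∧ ∀ x : ℝ, 1 ≤ x → |Chebyshev.psi x - x| ≤ K * x ^ β := by
  obtain ⟨K, hK, h⟩ := exists_abs_psiOne_add_one_sub_psiOne_sub_le hσ₀ hβ hβ₂ hζ
  refine ⟨4 * K + 2, by positivity, fun x hx => ?_⟩
  have hxβ : 1 ≤ x ^ β := Real.one_le_rpow hx (hσ₀.trans hβ).le
  rw [abs_le]
  constructor
  · rcases lt_or_ge x 2 with hx₂ | hx₂
    · rw [Chebyshev.psi_eq_zero_of_lt_two hx₂]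
      nlinarith
    · have hlower := psiOne_add_one_sub_psiOne_le_psi (x := x - 1) (by linarith)
      have hdiff := (abs_le.1 (h (x - 1) (by linarith))).1
      rw [sub_add_cancel] at hlower hdiff
      nlinarith
  · have hupper := psi_le_psiOne_add_one_sub_psiOne (zero_le_one.trans hx)
    have hdiff := (abs_le.1 (h x hx)).2
    have hpow : (x + 1) ^ β ≤ 4 * x ^ β := calc
      (x + 1) ^ β ≤ (2 * x) ^ β := by gcongr <;> linarith
      _ = 2 ^ β * x ^ β := Real.mul_rpow (by norm_num) (by linarith)
      _ ≤ 2 ^ (2 : ℝ) * x ^ β := by gcongr; norm_num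
      _ = 4 * x ^ β := by norm_num
    nlinarith

lemma exists_abs_theta_sub_le {β : ℝ} (hσ₀ : 1 / 2 ≤ σ₀) (hβ : σ₀ < β) (hβ₂ : β ≤ 2)
    (hζ : ∀ s : ℂ, σ₀ < s.re → riemannZeta s ≠ 0) :
    ∃ K, ∀ x : ℝ, 1 ≤ x → |Chebyshev.theta x - x| ≤ K * x ^ β := by
  obtain ⟨K, _, hpsi⟩ := exists_abs_psi_sub_le (one_half_pos.trans_le hσ₀) hβ hβ₂ hζ
  obtain ⟨C, hC⟩ := Chebyshev.psi_sub_theta_le_mul_sqrt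
  refine ⟨|C| + K, fun x hx => ?_⟩
  have hsqrt : √x ≤ x ^ β := by
    rw [Real.sqrt_eq_rpow]
    exact Real.rpow_le_rpow_of_exponent_le hx (hσ₀.trans hβ.le)
  have htheta : |Chebyshev.theta x - Chebyshev.psi x| ≤ |C| * x ^ β := by
    rw [abs_sub_comm, abs_of_nonneg (sub_nonneg.2 (Chebyshev.theta_le_psi x))]
    exact (hC x).trans (by gcongr; exact le_abs_self C)
  calc |Chebyshev.theta x - x|
      ≤ |Chebyshev.theta x - Chebyshev.psi x| + |Chebyshev.psi x - x| := abs_sub_le _ _ _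
    _ ≤ (|C| + K) * x ^ β := by rw [add_mul]; gcongr; exact hpsi x hx

end Chebyshev

/-- The entire exponential integral `Ein z = ∫₀^z (1 - e⁻ᵗ) / t dt`, through its power series; it is
the entire part of `expIntegralE1`. -/
noncomputable def expIntegralEin (z : ℂ) : ℂ :=
  -∑' k : ℕ, (-z) ^ (k + 1) / (((k + 1) * Nat.factorial (k + 1) : ℕ) : ℂ)

lemma expIntegralE1_eq (z : ℂ) :
    expIntegralE1 z = -(Real.eulerMascheroniConstant : ℂ) - Complex.log z + expIntegralEin z :=
  sub_eq_add_neg _ _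

lemma expIntegralEin_zero : expIntegralEin 0 = 0 := by simp [expIntegralEin]

lemma norm_neg_pow_div_mul_factorial_le {R : ℝ} {z : ℂ} (hz : ‖z‖ ≤ R) (k : ℕ) :
    ‖(-z) ^ (k + 1) / (((k + 1) * Nat.factorial (k + 1) : ℕ) : ℂ)‖ ≤
      R ^ (k + 1) / (Nat.factorial (k + 1)) := by
  have hfact : (Nat.factorial (k + 1) : ℝ) ≤ ((k + 1) * Nat.factorial (k + 1) : ℕ) :=
    mod_cast Nat.le_mul_of_pos_left _ k.succ_pos
  have : (0 : ℝ) < Nat.factorial (k + 1) := mod_cast Nat.factorial_pos _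
  have hR : 0 ≤ R := (norm_nonneg z).trans hz
  rw [norm_div, norm_pow, norm_neg, Complex.norm_natCast]
  gcongr

lemma summable_pow_succ_div_factorial (R : ℝ) :
    Summable fun k : ℕ => R ^ (k + 1) / (Nat.factorial (k + 1)) :=
  (summable_nat_add_iff 1).2 (Real.summable_pow_div_factorial R)

lemma differentiable_expIntegralEin : Differentiable ℂ expIntegralEin := fun z =>
  have hsum : DifferentiableOn ℂ
      (fun w : ℂ => ∑' k : ℕ, (-w) ^ (k + 1) / (((k + 1) * Nat.factorial (k + 1) : ℕ) : ℂ))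
      (Metric.ball 0 (‖z‖ + 1)) :=
    Complex.differentiableOn_tsum_of_summable_norm (summable_pow_succ_div_factorial _)
      (fun _ => Differentiable.differentiableOn (by fun_prop)) Metric.isOpen_ball
      fun k _ hw => norm_neg_pow_div_mul_factorial_le (mem_ball_zero_iff.1 hw).le k
  (hsum.differentiableAt (Metric.isOpen_ball.mem_nhds (by simp))).neg

lemma hasDerivAt_neg_pow_div_mul_factorial {z : ℂ} (hz : z ≠ 0) (k : ℕ) :
    HasDerivAt (fun w : ℂ => (-w) ^ (k + 1) / (((k + 1) * Nat.factorial (k + 1) : ℕ) : ℂ))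
      ((-z) ^ (k + 1) / (Nat.factorial (k + 1) : ℂ) / z) z := by
  refine (((hasDerivAt_id z).neg.pow (k + 1)).div_const _).congr_deriv ?_
  have hk : (k : ℂ) + 1 ≠ 0 := mod_cast k.succ_ne_zero
  have hfact : (Nat.factorial (k + 1) : ℂ) ≠ 0 := mod_cast Nat.factorial_ne_zero _
  simp only [Pi.neg_apply, id_eq, Nat.cast_mul, add_tsub_cancel_right, pow_succ]
  push_cast
  field_simp

lemma hasSum_neg_pow_succ_div_factorial_div (z : ℂ) :
    HasSum (fun k : ℕ => (-z) ^ (k + 1) / (Nat.factorial (k + 1) : ℂ) / z)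
      ((Complex.exp (-z) - 1) / z) := by
  have hexp : HasSum (fun k : ℕ => (-z) ^ k / (Nat.factorial k : ℂ)) (Complex.exp (-z)) :=
    Complex.exp_eq_exp_ℂ ▸ NormedSpace.expSeries_div_hasSum_exp (-z)
  simpa using ((hasSum_nat_add_iff' 1).2 hexp).div_const z

lemma hasDerivAt_expIntegralEin {z : ℂ} (hz : z ≠ 0) :
    HasDerivAt expIntegralEin ((1 - Complex.exp (-z)) / z) z := by
  have hderiv := Complex.hasSum_deriv_of_summable_norm (z := z)
    (F := fun k w => (-w) ^ (k + 1) / (((k + 1) * Nat.factorial (k + 1) : ℕ) : ℂ))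
    (summable_pow_succ_div_factorial (‖z‖ + 1))
    (fun _ => Differentiable.differentiableOn (by fun_prop)) Metric.isOpen_ball
    (fun k _ hw => norm_neg_pow_div_mul_factorial_le (mem_ball_zero_iff.1 hw).le k) (by simp)
  simp_rw [(hasDerivAt_neg_pow_div_mul_factorial hz _).deriv] at hderiv
  refine differentiable_expIntegralEin.differentiableAt.hasDerivAt.congr_deriv ?_
  have hneg : deriv expIntegralEin z = -_ := deriv.fun_neg
  rw [hneg, hderiv.unique (hasSum_neg_pow_succ_div_factorial_div z), ← neg_div, neg_sub]

lemma hasDerivAt_expIntegralE1 {z : ℂ} (hz : z ∈ Complex.slitPlane) :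
    HasDerivAt expIntegralE1 (-Complex.exp (-z) / z) z := by
  have h0 := Complex.slitPlane_ne_zero hz
  rw [funext expIntegralE1_eq]
  refine (((Complex.hasDerivAt_log hz).const_sub _).add
    (hasDerivAt_expIntegralEin h0)).congr_deriv ?_
  field_simp
  ring

open MeasureTheory in
lemma integral_log_mul_exp_neg :
    ∫ t : ℝ in Set.Ioi 0, ((Real.log t * Real.exp (-t) : ℝ) : ℂ) =
      -(Real.eulerMascheroniConstant : ℂ) := by
  have hGamma : Complex.Gamma =ᶠ[nhds 1] Complex.GammaIntegral := by
    filter_upwards [(isOpen_lt continuous_const Complex.continuous_re).mem_nhds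
      (show (0 : ℝ) < (1 : ℂ).re by simp)] with s hs
    exact Complex.Gamma_eq_integral hs
  have hderiv := ((Complex.hasDerivAt_GammaIntegral (s := 1) (by simp)).congr_of_eventuallyEq
    hGamma).unique Complex.hasDerivAt_Gamma_one
  rw [← hderiv]
  congr 1 with t
  simp

-- A non-integrable function would have integral `0`, but the integral is `-γ < 0`.
open MeasureTheory in
lemma integrableOn_log_mul_exp_neg :
    IntegrableOn (fun t : ℝ => ((Real.log t * Real.exp (-t) : ℝ) : ℂ)) (Set.Ioi 0) := by
  by_contra hnot
  have hγ : Real.eulerMascheroniConstant = 0 := by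
    have hint := integral_log_mul_exp_neg
    rw [integral_undef hnot] at hint
    simpa using hint.symm
  linarith [Real.one_half_lt_eulerMascheroniConstant]

lemma continuousWithinAt_one_sub_exp_neg_mul_log :
    ContinuousWithinAt (fun x : ℝ => (1 - Real.exp (-x)) * Real.log x) (Set.Ici 0) 0 := by
  have hxlog : Tendsto (fun x : ℝ => |x * Real.log x|) (nhdsWithin 0 (Set.Ici 0)) (nhds 0) := by
    simpa using (Real.continuous_mul_log.abs.tendsto 0).mono_left
      (nhdsWithin_le_nhds (s := Set.Ici 0))
  rw [ContinuousWithinAt]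
  simp only [neg_zero, Real.exp_zero, sub_self, Real.log_zero, mul_zero]
  refine squeeze_zero_norm' ?_ hxlog
  filter_upwards [self_mem_nhdsWithin] with x (hx : 0 ≤ x)
  have hexp : Real.exp (-x) ≤ 1 := by simpa using hx
  rw [Real.norm_eq_abs, abs_mul, abs_mul, abs_of_nonneg (sub_nonneg.2 hexp), abs_of_nonneg hx]
  gcongr
  linarith [Real.add_one_le_exp (-x)]

lemma hasDerivAt_one_sub_exp_neg_mul_log_sub_expIntegralEin {x : ℝ} (hx : 0 < x) :
    HasDerivAt (fun x : ℝ => (((1 - Real.exp (-x)) * Real.log x : ℝ) : ℂ) - expIntegralEin x)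
      ((Real.log x * Real.exp (-x) : ℝ) : ℂ) x := by
  have hxc : (x : ℂ) ≠ 0 := mod_cast hx.ne'
  have hexp := ((hasDerivAt_neg x).exp).const_sub 1
  refine ((hexp.mul (Real.hasDerivAt_log hx.ne')).ofReal_comp.sub
    (hasDerivAt_expIntegralEin hxc).comp_ofReal).congr_deriv ?_
  push_cast
  field_simp
  ring

open MeasureTheory in
lemma tendsto_one_sub_exp_neg_mul_log_sub_expIntegralEin :
    Tendsto (fun x : ℝ => (((1 - Real.exp (-x)) * Real.log x : ℝ) : ℂ) - expIntegralEin x) atTop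
      (nhds (-(Real.eulerMascheroniConstant : ℂ))) := by
  have hderiv := fun x (hx : x ∈ Set.Ioi (0 : ℝ)) =>
    hasDerivAt_one_sub_exp_neg_mul_log_sub_expIntegralEin hx
  have hcont : ContinuousWithinAt (fun x : ℝ =>
      (((1 - Real.exp (-x)) * Real.log x : ℝ) : ℂ) - expIntegralEin x) (Set.Ici 0) 0 :=
    (Complex.continuous_ofReal.continuousAt.comp_continuousWithinAt
      continuousWithinAt_one_sub_exp_neg_mul_log).sub
      (differentiable_expIntegralEin.continuous.comp
        Complex.continuous_ofReal).continuousWithinAt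
  have hlim := tendsto_limUnder_of_hasDerivAt_of_integrableOn_Ioi hderiv
    integrableOn_log_mul_exp_neg
  have hint := integral_Ioi_of_hasDerivAt_of_tendsto hcont hderiv integrableOn_log_mul_exp_neg hlim
  rw [integral_log_mul_exp_neg] at hint
  simpa [hint, expIntegralEin_zero] using hlim

lemma tendsto_exp_neg_mul_log_atTop :
    Tendsto (fun x : ℝ => Real.exp (-x) * Real.log x) atTop (nhds 0) := by
  refine squeeze_zero' ?_ ?_ (Real.tendsto_pow_mul_exp_neg_atTop_nhds_zero 1)
  · filter_upwards [eventually_ge_atTop 1] with x hx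
    exact mul_nonneg (Real.exp_nonneg _) (Real.log_nonneg hx)
  · filter_upwards [eventually_ge_atTop 0] with x hx
    rw [pow_one, mul_comm]
    gcongr
    exact Real.log_le_self hx

lemma tendsto_expIntegralE1_ofReal_atTop :
    Tendsto (fun x : ℝ => expIntegralE1 x) atTop (nhds 0) := by
  have hexp := (Complex.continuous_ofReal.tendsto 0).comp tendsto_exp_neg_mul_log_atTop
  have hlim := (tendsto_const_nhds (x := -(Real.eulerMascheroniConstant : ℂ))).sub
    (tendsto_one_sub_exp_neg_mul_log_sub_expIntegralEin.add hexp)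
  rw [Complex.ofReal_zero, add_zero, sub_self] at hlim
  refine hlim.congr' ?_
  filter_upwards [eventually_ge_atTop 0] with x hx
  rw [expIntegralE1_eq, ← Complex.ofReal_log hx, Function.comp_apply]
  push_cast
  ring

lemma mul_ofReal_mem_slitPlane {z : ℂ} (hz : z ∈ Complex.slitPlane) {r : ℝ} (hr : 0 < r) :
    z * r ∈ Complex.slitPlane := by
  rw [Complex.mem_slitPlane_iff] at hz ⊢
  simpa [Complex.re_mul_ofReal, Complex.im_mul_ofReal, hr, hr.ne'] using hz

lemma hasDerivAt_expIntegralE1_mul_log {s : ℂ} (hs : s - 1 ∈ Complex.slitPlane) {x : ℝ}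
    (hx : 1 < x) :
    HasDerivAt (fun x : ℝ => expIntegralE1 ((s - 1) * (Real.log x : ℂ)))
      (-((x : ℂ) ^ (-s) / (Real.log x : ℂ))) x := by
  have hx0 : 0 < x := one_pos.trans hx
  have hxc : (x : ℂ) ≠ 0 := mod_cast hx0.ne'
  have hlog : (Real.log x : ℂ) ≠ 0 := mod_cast (Real.log_pos hx).ne'
  have hs0 : s - 1 ≠ 0 := Complex.slitPlane_ne_zero hs
  have hexp : Complex.exp (-((s - 1) * (Real.log x : ℂ))) = (x : ℂ) ^ (-s) * x := by
    rw [neg_mul_eq_neg_mul, neg_sub, sub_eq_neg_add, Complex.cpow_def_of_ne_zero hxc,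
      ← Complex.ofReal_log hx0.le, add_mul, Complex.exp_add, one_mul, mul_comm (-s),
      ← Complex.ofReal_exp (Real.log x), Real.exp_log hx0]
  refine ((hasDerivAt_expIntegralE1 (mul_ofReal_mem_slitPlane hs (Real.log_pos hx))).comp x
    ((Real.hasDerivAt_log hx0.ne').ofReal_comp.const_mul (s - 1))).congr_deriv ?_
  rw [hexp]
  push_cast
  field_simp

/-- The weight `t ↦ t⁻ˢ / log t` that turns the summand `log p` of Chebyshev's `θ` into `p⁻ˢ`. -/
noncomputable def cpowDivLog (s : ℂ) (t : ℝ) : ℂ := (t : ℂ) ^ (-s) / (Real.log t : ℂ)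

/-- The derivative of `cpowDivLog s` on `(1, ∞)`. -/
noncomputable def cpowDivLogDeriv (s : ℂ) (t : ℝ) : ℂ :=
  -s * (t : ℂ) ^ (-s - 1) / (Real.log t : ℂ) - (t : ℂ) ^ (-s - 1) / (Real.log t : ℂ) ^ 2

section AbelSummation

open MeasureTheory intervalIntegral

variable {s : ℂ} {x : ℝ}

lemma hasDerivAt_cpowDivLog (s : ℂ) {t : ℝ} (ht : 1 < t) :
    HasDerivAt (cpowDivLog s) (cpowDivLogDeriv s t) t := by
  have ht0 : 0 < t := one_pos.trans ht
  have htc : (t : ℂ) ≠ 0 := mod_cast ht0.ne'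
  have hlog : (Real.log t : ℂ) ≠ 0 := mod_cast (Real.log_pos ht).ne'
  have hcpow : HasDerivAt (fun u : ℝ => (u : ℂ) ^ (-s)) (-s * (t : ℂ) ^ (-s - 1) * 1) t :=
    ((hasDerivAt_id (t : ℂ)).cpow_const (Complex.ofReal_mem_slitPlane.2 ht0)).comp_ofReal
  refine (hcpow.div (Real.hasDerivAt_log ht0.ne').ofReal_comp hlog).congr_deriv ?_
  rw [cpowDivLogDeriv, Complex.cpow_sub _ _ htc, Complex.cpow_one]
  push_cast
  field_simp

lemma continuousOn_cpowDivLogDeriv (s : ℂ) : ContinuousOn (cpowDivLogDeriv s) (Set.Ioi 1) := by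
  intro t (ht : 1 < t)
  have ht0 : t ≠ 0 := (one_pos.trans ht).ne'
  have hlog0 : (Real.log t : ℂ) ≠ 0 := mod_cast (Real.log_pos ht).ne'
  have hcpow : ContinuousAt (fun u : ℝ => (u : ℂ) ^ (-s - 1)) t :=
    Complex.continuousAt_ofReal_cpow_const _ _ (.inr ht0)
  have hlog : ContinuousAt (fun u : ℝ => (Real.log u : ℂ)) t :=
    Complex.continuous_ofReal.continuousAt.comp (Real.continuousAt_log ht0)
  exact (((continuousAt_const.mul hcpow).div hlog hlog0).sub
    (hcpow.div (hlog.pow 2) (pow_ne_zero 2 hlog0))).continuousWithinAt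

lemma continuousOn_cpowDivLogDeriv_Icc (s : ℂ) (x : ℝ) :
    ContinuousOn (cpowDivLogDeriv s) (Set.Icc 2 x) :=
  (continuousOn_cpowDivLogDeriv s).mono fun _ ht => one_lt_two.trans_le ht.1

lemma sum_primesBelow_cpow_eq (s : ℂ) (hx : 2 ≤ x) :
    ∑ p ∈ Nat.primesBelow (⌊x⌋₊ + 1), (p : ℂ) ^ (-s) = cpowDivLog s x * (Chebyshev.theta x : ℂ) -
      ∫ t in (2 : ℝ)..x, cpowDivLogDeriv s t * (Chebyshev.theta t : ℂ) := by
  set c : ℕ → ℂ := fun n => if n.Prime then (Real.log n : ℂ) else 0 with hc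
  have htheta (t : ℝ) : ∑ n ∈ Finset.Icc 0 ⌊t⌋₊, c n = (Chebyshev.theta t : ℂ) := by
    simp [hc, Chebyshev.theta_eq_sum_Icc, Finset.sum_filter, apply_ite]
  have hderiv : ∀ t ∈ Set.Icc 2 x, HasDerivAt (cpowDivLog s) (cpowDivLogDeriv s t) t :=
    fun t ht => hasDerivAt_cpowDivLog s (one_lt_two.trans_le ht.1)
  have habel := sum_mul_eq_sub_integral_mul₁ c (f := cpowDivLog s) (by simp [hc]) (by simp [hc]) x
    (fun t ht => (hderiv t ht).differentiableAt)
    ((continuousOn_cpowDivLogDeriv_Icc s x).congr fun t ht => (hderiv t ht).deriv).integrableOn_Icc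
  have hsum : ∑ n ∈ Finset.Icc 0 ⌊x⌋₊, cpowDivLog s n * c n =
      ∑ p ∈ Nat.primesBelow (⌊x⌋₊ + 1), (p : ℂ) ^ (-s) := by
    rw [Nat.primesBelow, Finset.sum_filter, Nat.range_succ_eq_Icc_zero]
    refine Finset.sum_congr rfl fun n _ => ?_
    by_cases hn : n.Prime
    · have hlog : (Real.log n : ℂ) ≠ 0 :=
        mod_cast (Real.log_pos (mod_cast hn.one_lt)).ne'
      simp only [hc, hn, if_true]
      rw [cpowDivLog, div_mul_cancel₀ _ hlog, Complex.ofReal_natCast]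
    · simp [hc, hn]
  rw [hsum] at habel
  simp_rw [htheta] at habel
  rw [habel, integral_of_le hx]
  congr 1
  exact setIntegral_congr_fun measurableSet_Ioc fun t ht => by
    simp only [(hderiv t (Set.Ioc_subset_Icc_self ht)).deriv]

lemma intervalIntegrable_cpowDivLogDeriv_mul_ofReal (s : ℂ) (hx : 2 ≤ x) :
    IntervalIntegrable (fun t : ℝ => cpowDivLogDeriv s t * (t : ℂ)) volume 2 x := by
  refine ContinuousOn.intervalIntegrable ?_
  rw [Set.uIcc_of_le hx]
  exact (continuousOn_cpowDivLogDeriv_Icc s x).mul Complex.continuous_ofReal.continuousOn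

lemma intervalIntegrable_cpowDivLogDeriv_mul_theta (s : ℂ) (hx : 2 ≤ x) :
    IntervalIntegrable (fun t : ℝ => cpowDivLogDeriv s t * (Chebyshev.theta t : ℂ)) volume 2 x := by
  have htheta := Chebyshev.theta_mono.intervalIntegrable (μ := volume) (a := 2) (b := x)
  have htheta' : IntervalIntegrable (fun t => (Chebyshev.theta t : ℂ)) volume 2 x :=
    ⟨htheta.1.ofReal, htheta.2.ofReal⟩
  refine htheta'.continuousOn_mul ?_
  rw [Set.uIcc_of_le hx]
  exact continuousOn_cpowDivLogDeriv_Icc s x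

-- The main term `θ(t) ~ t` contributes `∫ w'(t) t dt = [t w(t)] - ∫ w(t) dt`, and the derivative of
-- `E₁((s - 1) log t)` is `-w(t)`.
lemma integral_cpowDivLogDeriv_mul_ofReal (hs : s - 1 ∈ Complex.slitPlane) (hx : 2 ≤ x) :
    ∫ t in (2 : ℝ)..x, cpowDivLogDeriv s t * (t : ℂ) =
      (x * cpowDivLog s x + expIntegralE1 ((s - 1) * (Real.log x : ℂ))) -
      (2 * cpowDivLog s 2 + expIntegralE1 ((s - 1) * (Real.log 2 : ℂ))) := by
  have hderiv : ∀ t ∈ Set.uIcc 2 x, HasDerivAt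
      (fun t : ℝ => (t : ℂ) * cpowDivLog s t + expIntegralE1 ((s - 1) * (Real.log t : ℂ)))
      (cpowDivLogDeriv s t * t) t := fun t ht => by
    rw [Set.uIcc_of_le hx] at ht
    have ht1 : 1 < t := one_lt_two.trans_le ht.1
    refine (((hasDerivAt_id t).ofReal_comp.mul (hasDerivAt_cpowDivLog s ht1)).add
      (hasDerivAt_expIntegralE1_mul_log hs ht1)).congr_deriv ?_
    simp only [id_eq, Complex.ofReal_one, cpowDivLog]
    ring
  simpa using integral_eq_sub_of_hasDerivAt hderiv
    (intervalIntegrable_cpowDivLogDeriv_mul_ofReal s hx)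

lemma neg_expIntegralE1_sub_sum_primesBelow_eq (hs : s - 1 ∈ Complex.slitPlane) (hx : 2 ≤ x) :
    -expIntegralE1 ((s - 1) * (Real.log x : ℂ)) -
        ∑ p ∈ Nat.primesBelow (⌊x⌋₊ + 1), (p : ℂ) ^ (-s) =
      -expIntegralE1 ((s - 1) * (Real.log 2 : ℂ)) - 2 * cpowDivLog s 2 -
        cpowDivLog s x * ((Chebyshev.theta x - x : ℝ) : ℂ) +
        ∫ t in (2 : ℝ)..x, cpowDivLogDeriv s t * ((Chebyshev.theta t - t : ℝ) : ℂ) := by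
  have hsplit : ∫ t in (2 : ℝ)..x, cpowDivLogDeriv s t * ((Chebyshev.theta t - t : ℝ) : ℂ) =
      (∫ t in (2 : ℝ)..x, cpowDivLogDeriv s t * (Chebyshev.theta t : ℂ)) -
        ∫ t in (2 : ℝ)..x, cpowDivLogDeriv s t * (t : ℂ) := by
    rw [← integral_sub (intervalIntegrable_cpowDivLogDeriv_mul_theta s hx)
      (intervalIntegrable_cpowDivLogDeriv_mul_ofReal s hx)]
    simp only [Complex.ofReal_sub, mul_sub]
  rw [hsplit, sum_primesBelow_cpow_eq s hx, integral_cpowDivLogDeriv_mul_ofReal hs hx]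
  push_cast
  ring

end AbelSummation

/-- The error `(θ t - t) / logᵏ t` against which the powers `t⁻ˢ⁻¹` are integrated after Abel
summation; both `k = 1` and `k = 2` occur in `cpowDivLogDeriv s t * (θ t - t)`. -/
noncomputable def thetaErrorDivLogPow (k : ℕ) (t : ℝ) : ℂ :=
  ((Chebyshev.theta t - t) / Real.log t ^ k : ℝ)

/-- The limit of `-E₁((s - 1) log x) - ∑_{p ≤ x} p⁻ˢ` as `x → ∞`. -/
noncomputable def primeSumLimit (s : ℂ) : ℂ :=
  -expIntegralE1 ((s - 1) * (Real.log 2 : ℂ)) - 2 * cpowDivLog s 2 +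
    (-s * (∫ t in Set.Ioi (2 : ℝ), thetaErrorDivLogPow 1 t * (t : ℂ) ^ (-s - 1)) -
      ∫ t in Set.Ioi (2 : ℝ), thetaErrorDivLogPow 2 t * (t : ℂ) ^ (-s - 1))

section PrimeSumLimit

open MeasureTheory

variable {s : ℂ} {β K : ℝ}

lemma cpowDivLogDeriv_mul_theta_sub (s : ℂ) (t : ℝ) :
    cpowDivLogDeriv s t * ((Chebyshev.theta t - t : ℝ) : ℂ) =
      -s * (thetaErrorDivLogPow 1 t * (t : ℂ) ^ (-s - 1)) -
        thetaErrorDivLogPow 2 t * (t : ℂ) ^ (-s - 1) := by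
  simp only [cpowDivLogDeriv, thetaErrorDivLogPow]
  push_cast
  ring

lemma measurable_thetaErrorDivLogPow (k : ℕ) : Measurable (thetaErrorDivLogPow k) := by
  have htheta : Measurable Chebyshev.theta := Chebyshev.theta_mono.measurable
  unfold thetaErrorDivLogPow
  fun_prop

lemma norm_thetaErrorDivLogPow_le (hK : ∀ x : ℝ, 1 ≤ x → |Chebyshev.theta x - x| ≤ K * x ^ β)
    (k : ℕ) : ∀ t > 2, ‖thetaErrorDivLogPow k t‖ ≤ K / Real.log 2 ^ k * t ^ β := by
  intro t ht
  have hlog₂ : 0 < Real.log 2 := Real.log_pos one_lt_two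
  have hlog : Real.log 2 ≤ Real.log t := Real.log_le_log two_pos ht.le
  have htheta := hK t (one_lt_two.trans ht).le
  have hnonneg : 0 ≤ K * t ^ β := (abs_nonneg _).trans htheta
  rw [thetaErrorDivLogPow, Complex.norm_real, norm_div, norm_pow, Real.norm_eq_abs,
    Real.norm_eq_abs, abs_of_pos (hlog₂.trans_le hlog), div_mul_eq_mul_div]
  gcongr

lemma differentiableAt_primeSumLimit (hs : s - 1 ∈ Complex.slitPlane)
    (hK : ∀ x : ℝ, 1 ≤ x → |Chebyshev.theta x - x| ≤ K * x ^ β) (hβ : β < s.re) :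
    DifferentiableAt ℂ primeSumLimit s := by
  have hint (k : ℕ) := differentiableAt_integral_Ioi_mul_cpow two_pos
    (measurable_thetaErrorDivLogPow k) (norm_thetaErrorDivLogPow_le hK k) hβ
  have hE₁ : DifferentiableAt ℂ (fun s : ℂ => expIntegralE1 ((s - 1) * (Real.log 2 : ℂ))) s :=
    DifferentiableAt.comp (g := expIntegralE1) s (hasDerivAt_expIntegralE1
      (mul_ofReal_mem_slitPlane hs (Real.log_pos one_lt_two))).differentiableAt (by fun_prop)
  have hweight : DifferentiableAt ℂ (fun s : ℂ => cpowDivLog s 2) s :=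
    (DifferentiableAt.const_cpow (by fun_prop) (.inl (by norm_num))).div_const _
  exact (hE₁.neg.sub (hweight.const_mul _)).add
    ((differentiableAt_id.neg.mul (hint 1)).sub (hint 2))

lemma tendsto_cpowDivLog_mul_theta_sub
    (hK : ∀ x : ℝ, 1 ≤ x → |Chebyshev.theta x - x| ≤ K * x ^ β) (hβ : β < s.re) :
    Tendsto (fun x : ℝ => cpowDivLog s x * ((Chebyshev.theta x - x : ℝ) : ℂ)) atTop (nhds 0) := by
  have hpow : Tendsto (fun x : ℝ => K / Real.log 2 ^ 1 * x ^ (-(s.re - β))) atTop (nhds 0) := by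
    simpa only [mul_zero] using
      (tendsto_rpow_neg_atTop (sub_pos.2 hβ)).const_mul (K / Real.log 2 ^ 1)
  refine squeeze_zero_norm' ?_ hpow
  filter_upwards [eventually_gt_atTop 2] with x hx
  have hx0 : 0 < x := two_pos.trans hx
  have hswap : cpowDivLog s x * ((Chebyshev.theta x - x : ℝ) : ℂ) =
      thetaErrorDivLogPow 1 x * (x : ℂ) ^ (-s) := by
    rw [cpowDivLog, thetaErrorDivLogPow]
    push_cast
    ring
  calc ‖cpowDivLog s x * ((Chebyshev.theta x - x : ℝ) : ℂ)‖
      ≤ K / Real.log 2 ^ 1 * x ^ β * x ^ (-s.re) := by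
        rw [hswap, norm_mul, Complex.norm_cpow_eq_rpow_re_of_pos hx0, Complex.neg_re]
        gcongr
        exact norm_thetaErrorDivLogPow_le hK 1 x hx
    _ = K / Real.log 2 ^ 1 * x ^ (-(s.re - β)) := by
        rw [mul_assoc, ← Real.rpow_add hx0]
        ring_nf

lemma tendsto_neg_expIntegralE1_sub_sum_primesBelow (hs : s - 1 ∈ Complex.slitPlane)
    (hK : ∀ x : ℝ, 1 ≤ x → |Chebyshev.theta x - x| ≤ K * x ^ β) (hβ : β < s.re) :
    Tendsto (fun x : ℝ => -expIntegralE1 ((s - 1) * (Real.log x : ℂ)) -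
      ∑ p ∈ Nat.primesBelow (⌊x⌋₊ + 1), (p : ℂ) ^ (-s)) atTop (nhds (primeSumLimit s)) := by
  have hint (k : ℕ) := integrableOn_Ioi_mul_cpow two_pos
    (measurable_thetaErrorDivLogPow k) (norm_thetaErrorDivLogPow_le hK k) hβ
  have hlim := intervalIntegral_tendsto_integral_Ioi 2
    (((hint 1).const_mul (-s)).sub (hint 2)) tendsto_id
  simp only [Pi.sub_apply] at hlim
  rw [integral_sub ((hint 1).const_mul _) (hint 2), integral_const_mul] at hlim
  have hsum := ((tendsto_const_nhds (x := -expIntegralE1 ((s - 1) * (Real.log 2 : ℂ)) -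
    2 * cpowDivLog s 2)).sub (tendsto_cpowDivLog_mul_theta_sub hK hβ)).add hlim
  rw [sub_zero] at hsum
  refine hsum.congr' ?_
  filter_upwards [eventually_ge_atTop 2] with x hx
  simp only [neg_expIntegralE1_sub_sum_primesBelow_eq hs hx, cpowDivLogDeriv_mul_theta_sub, id_eq]

end PrimeSumLimit

section PrimePowers

variable {p : ℕ} {s : ℂ} {σ : ℝ}

lemma two_rpow_neg_lt_one (hσ : 0 < σ) : (2 : ℝ) ^ (-σ) < 1 :=
  Real.rpow_lt_one_of_one_lt_of_neg one_lt_two (neg_neg_of_pos hσ)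

lemma norm_prime_cpow_neg_le (hp : p.Prime) (hs : σ ≤ s.re) :
    ‖(p : ℂ) ^ (-s)‖ ≤ (p : ℝ) ^ (-σ) := by
  rw [Complex.norm_natCast_cpow_of_pos hp.pos, Complex.neg_re]
  exact Real.rpow_le_rpow_of_exponent_le (mod_cast hp.one_lt.le) (neg_le_neg hs)

lemma norm_prime_cpow_neg_le_two_rpow (hp : p.Prime) (hσ : 0 < σ) (hs : σ ≤ s.re) :
    ‖(p : ℂ) ^ (-s)‖ ≤ (2 : ℝ) ^ (-σ) :=
  (norm_prime_cpow_neg_le hp hs).trans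
    (Real.rpow_le_rpow_of_nonpos two_pos (mod_cast hp.two_le) (neg_nonpos.2 hσ.le))

lemma norm_prime_cpow_neg_lt_one (hp : p.Prime) (hs : 0 < s.re) : ‖(p : ℂ) ^ (-s)‖ < 1 :=
  (norm_prime_cpow_neg_le_two_rpow hp hs le_rfl).trans_lt (two_rpow_neg_lt_one hs)

lemma one_add_prime_cpow_neg_mem_slitPlane (hp : p.Prime) (hs : 0 < s.re) :
    1 + (p : ℂ) ^ (-s) ∈ Complex.slitPlane :=
  Complex.mem_slitPlane_of_norm_lt_one (norm_prime_cpow_neg_lt_one hp hs)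

end PrimePowers

/-- The summand, at `n`, of the correction series `∑ₚ (p⁻ˢ - log (1 + p⁻ˢ))` comparing the logarithm
of the Euler product with the sum over primes; it vanishes unless `n` is prime. -/
noncomputable def eulerCorrectionTerm (n : ℕ) (s : ℂ) : ℂ :=
  if n.Prime then (n : ℂ) ^ (-s) - Complex.log (1 + (n : ℂ) ^ (-s)) else 0

/-- The correction series `∑ₚ (p⁻ˢ - log (1 + p⁻ˢ))` over the primes. -/
noncomputable def eulerCorrection (s : ℂ) : ℂ := ∑' n, eulerCorrectionTerm n s

section EulerCorrection

variable {s : ℂ} {σ : ℝ}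

lemma norm_eulerCorrectionTerm_le (hσ : 0 < σ) (hs : σ ≤ s.re) (n : ℕ) :
    ‖eulerCorrectionTerm n s‖ ≤ (n : ℝ) ^ (-(2 * σ)) * ((1 - (2 : ℝ) ^ (-σ))⁻¹ / 2) := by
  have hden : 0 < 1 - (2 : ℝ) ^ (-σ) := sub_pos.2 (two_rpow_neg_lt_one hσ)
  rw [eulerCorrectionTerm]
  split_ifs with hn
  · have hsq : (n : ℝ) ^ (-(2 * σ)) = ((n : ℝ) ^ (-σ)) ^ 2 := by
      rw [← Real.rpow_mul_natCast n.cast_nonneg]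
      ring_nf
    have hnorm := norm_prime_cpow_neg_le hn hs
    have hnorm₂ := norm_prime_cpow_neg_le_two_rpow hn hσ hs
    have hlt := norm_prime_cpow_neg_lt_one hn (hσ.trans_le hs)
    have : 0 ≤ (1 - ‖(n : ℂ) ^ (-s)‖)⁻¹ := inv_nonneg.2 (sub_nonneg.2 hlt.le)
    calc ‖(n : ℂ) ^ (-s) - Complex.log (1 + (n : ℂ) ^ (-s))‖
        ≤ ‖(n : ℂ) ^ (-s)‖ ^ 2 * (1 - ‖(n : ℂ) ^ (-s)‖)⁻¹ / 2 := by
          rw [norm_sub_rev]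
          exact Complex.norm_log_one_add_sub_self_le hlt
      _ ≤ ((n : ℝ) ^ (-σ)) ^ 2 * (1 - (2 : ℝ) ^ (-σ))⁻¹ / 2 := by
          gcongr
      _ = (n : ℝ) ^ (-(2 * σ)) * ((1 - (2 : ℝ) ^ (-σ))⁻¹ / 2) := by rw [hsq, mul_div_assoc]
  · rw [norm_zero]
    positivity

lemma summable_natCast_rpow_mul (hσ : 1 / 2 < σ) (c : ℝ) :
    Summable fun n : ℕ => (n : ℝ) ^ (-(2 * σ)) * c :=
  (Real.summable_nat_rpow.2 (by linarith)).mul_right c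

lemma hasSum_eulerCorrectionTerm (hs : 1 / 2 < s.re) :
    HasSum (fun n => eulerCorrectionTerm n s) (eulerCorrection s) :=
  (Summable.of_norm_bounded (summable_natCast_rpow_mul hs _) fun n =>
    norm_eulerCorrectionTerm_le (by linarith) le_rfl n).hasSum

lemma differentiableAt_eulerCorrectionTerm (hs : 0 < s.re) (n : ℕ) :
    DifferentiableAt ℂ (eulerCorrectionTerm n) s := by
  unfold eulerCorrectionTerm
  split_ifs with hn
  · have hpow : DifferentiableAt ℂ (fun s : ℂ => (n : ℂ) ^ (-s)) s :=
      DifferentiableAt.const_cpow (by fun_prop) (.inl (mod_cast hn.ne_zero))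
    exact hpow.sub ((hpow.const_add 1).clog (one_add_prime_cpow_neg_mem_slitPlane hn hs))
  · exact differentiableAt_const _

lemma differentiableAt_eulerCorrection (hs : 1 / 2 < s.re) :
    DifferentiableAt ℂ eulerCorrection s := by
  obtain ⟨σ, hσ, hσs⟩ := exists_between hs
  have hσ0 : 0 < σ := by linarith
  have hopen : IsOpen {z : ℂ | σ < z.re} := isOpen_lt continuous_const Complex.continuous_re
  exact (Complex.differentiableOn_tsum_of_summable_norm (summable_natCast_rpow_mul hσ _)
    (fun n z (hz : σ < z.re) =>
      (differentiableAt_eulerCorrectionTerm (hσ0.trans hz) n).differentiableWithinAt) hopen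
    fun n z (hz : σ < z.re) => norm_eulerCorrectionTerm_le hσ0 hz.le n).differentiableAt
      (hopen.mem_nhds hσs)

end EulerCorrection

section Continuation

variable {s : ℂ} {σ₀ : ℝ}

lemma sum_range_eulerCorrectionTerm (s : ℂ) (n : ℕ) :
    ∑ k ∈ Finset.range n, eulerCorrectionTerm k s =
      ∑ p ∈ Nat.primesBelow n, (p : ℂ) ^ (-s) -
        ∑ p ∈ Nat.primesBelow n, Complex.log (1 + (p : ℂ) ^ (-s)) := by
  rw [← Finset.sum_sub_distrib, Nat.primesBelow, Finset.sum_filter]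
  rfl

lemma prod_primesBelow_inv_one_add_cpow_eq_exp (hs : 0 < s.re) (n : ℕ) :
    ∏ p ∈ Nat.primesBelow n, (1 + (p : ℂ) ^ (-s))⁻¹ =
      Complex.exp (-∑ p ∈ Nat.primesBelow n, Complex.log (1 + (p : ℂ) ^ (-s))) := by
  rw [← Finset.sum_neg_distrib, Complex.exp_sum]
  refine Finset.prod_congr rfl fun p hp => ?_
  have hslit := one_add_prime_cpow_neg_mem_slitPlane (Nat.prime_of_mem_primesBelow hp) hs
  rw [Complex.exp_neg, Complex.exp_log (Complex.slitPlane_ne_zero hslit)]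

lemma tendsto_floor_add_one_atTop : Tendsto (fun x : ℝ => ⌊x⌋₊ + 1) atTop atTop :=
  (tendsto_add_atTop_nat 1).comp tendsto_nat_floor_atTop

lemma exists_lt_re_abs_theta_sub_le (hσ₀ : 1 / 2 ≤ σ₀)
    (hζ : ∀ s : ℂ, σ₀ < s.re → riemannZeta s ≠ 0) (hs : σ₀ < s.re) :
    ∃ β < s.re, ∃ K, ∀ x : ℝ, 1 ≤ x → |Chebyshev.theta x - x| ≤ K * x ^ β := by
  have hζ₁ : ∀ z : ℂ, min σ₀ 1 < z.re → riemannZeta z ≠ 0 := fun z hz =>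
    (min_lt_iff.1 hz).elim (hζ z) fun h1 => riemannZeta_ne_zero_of_one_le_re h1.le
  obtain ⟨β, hβ, hβs⟩ := exists_between
    (lt_min (min_lt_of_left_lt hs) (min_lt_of_right_lt one_lt_two) : min σ₀ 1 < min s.re 2)
  exact ⟨β, hβs.trans_le (min_le_left _ _), exists_abs_theta_sub_le
    (le_min hσ₀ (by norm_num)) hβ (hβs.le.trans (min_le_right _ _)) hζ₁⟩

lemma tendsto_exp_neg_expIntegralE1_mul_prod (hσ₀ : 1 / 2 ≤ σ₀)
    (hζ : ∀ s : ℂ, σ₀ < s.re → riemannZeta s ≠ 0) (hs : σ₀ < s.re)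
    (hs' : s - 1 ∈ Complex.slitPlane) :
    Tendsto
      (fun x : ℝ =>
        Complex.exp (-expIntegralE1 ((s - 1) * (Real.log x : ℂ))) *
          ∏ p ∈ Nat.primesBelow (⌊x⌋₊ + 1), (1 + (p : ℂ) ^ (-s))⁻¹)
      atTop (nhds (Complex.exp (primeSumLimit s + eulerCorrection s))) := by
  obtain ⟨β, hβ, K, hK⟩ := exists_lt_re_abs_theta_sub_le hσ₀ hζ hs
  have hhalf : 1 / 2 < s.re := hσ₀.trans_lt hs
  have hcorr := (hasSum_eulerCorrectionTerm hhalf).tendsto_sum_nat.comp tendsto_floor_add_one_atTop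
  refine ((tendsto_neg_expIntegralE1_sub_sum_primesBelow hs' hK hβ).add hcorr).cexp.congr
    fun x => ?_
  rw [prod_primesBelow_inv_one_add_cpow_eq_exp (one_half_pos.trans hhalf), ← Complex.exp_add,
    Function.comp_apply, sum_range_eulerCorrectionTerm]
  ring_nf

lemma tendsto_prod_primesBelow_inv_one_add_cpow (hs : 1 < s.re) :
    Tendsto (fun n => ∏ p ∈ Nat.primesBelow n, (1 + (p : ℂ) ^ (-s))⁻¹) atTop
      (nhds (riemannZeta (2 * s) / riemannZeta s)) := by
  have hs₂ : 1 < (2 * s).re := by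
    simp only [Complex.mul_re, Complex.re_ofNat, Complex.im_ofNat, zero_mul, sub_zero]
    linarith
  refine ((riemannZeta_eulerProduct hs₂).div (riemannZeta_eulerProduct hs)
    (riemannZeta_ne_zero_of_one_le_re hs.le)).congr fun n => ?_
  rw [Pi.div_apply, ← Finset.prod_div_distrib]
  refine Finset.prod_congr rfl fun p hp => ?_
  have hp' := Nat.prime_of_mem_primesBelow hp
  have hs0 : 0 < s.re := one_pos.trans hs
  have hsub : 1 - (p : ℂ) ^ (-s) ≠ 0 :=
    sub_ne_zero.2 fun h => (norm_prime_cpow_neg_lt_one hp' hs0).ne (by rw [← h, norm_one])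
  have hadd := Complex.slitPlane_ne_zero (one_add_prime_cpow_neg_mem_slitPlane hp' hs0)
  have hsq : (p : ℂ) ^ (-(2 * s)) = ((p : ℂ) ^ (-s)) ^ 2 := by
    rw [← Complex.cpow_nat_mul, Nat.cast_ofNat, mul_neg]
  have hfactor : 1 - ((p : ℂ) ^ (-s)) ^ 2 = (1 + (p : ℂ) ^ (-s)) * (1 - (p : ℂ) ^ (-s)) := by ring
  rw [hsq, hfactor]
  field_simp

lemma tendsto_exp_neg_expIntegralE1_mul_prod_ofReal {σ : ℝ} (hσ : 1 < σ) :
    Tendsto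
      (fun x : ℝ =>
        Complex.exp (-expIntegralE1 (((σ : ℂ) - 1) * (Real.log x : ℂ))) *
          ∏ p ∈ Nat.primesBelow (⌊x⌋₊ + 1), (1 + (p : ℂ) ^ (-(σ : ℂ)))⁻¹)
      atTop (nhds (riemannZeta (2 * σ) / riemannZeta σ)) := by
  have hE₁ : Tendsto (fun x : ℝ => expIntegralE1 (((σ : ℂ) - 1) * (Real.log x : ℂ))) atTop
      (nhds 0) :=
    (tendsto_expIntegralE1_ofReal_atTop.comp
      (Real.tendsto_log_atTop.const_mul_atTop (sub_pos.2 hσ))).congr fun x => by simp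
  simpa using hE₁.neg.cexp.mul ((tendsto_prod_primesBelow_inv_one_add_cpow
    (s := σ) (by simpa using hσ)).comp tendsto_floor_add_one_atTop)

/-- The part of the half-plane `Re s > σ₀` off the cut `s ≤ 1` along which `E₁((s - 1) log x)` is
discontinuous; the two sides of the limit formula are compared on it by analytic continuation. -/
def slitHalfPlane (σ₀ : ℝ) : Set ℂ := {s | σ₀ < s.re} ∩ {s | s - 1 ∈ Complex.slitPlane}

lemma isOpen_slitHalfPlane (σ₀ : ℝ) : IsOpen (slitHalfPlane σ₀) :=
  (isOpen_lt continuous_const Complex.continuous_re).inter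
    (Complex.isOpen_slitPlane.preimage (continuous_sub_right (1 : ℂ)))

lemma ofReal_mem_slitHalfPlane {σ : ℝ} (hσ : σ₀ < σ) (hσ1 : 1 < σ) :
    (σ : ℂ) ∈ slitHalfPlane σ₀ := by
  refine ⟨hσ, ?_⟩
  rw [Set.mem_ofPred_eq, ← Complex.ofReal_one, ← Complex.ofReal_sub]
  exact Complex.ofReal_mem_slitPlane.2 (sub_pos.2 hσ1)

lemma isPreconnected_slitHalfPlane (σ₀ : ℝ) : IsPreconnected (slitHalfPlane σ₀) := by
  obtain ⟨σ, hσ⟩ := exists_gt (max σ₀ 1)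
  have hmem := ofReal_mem_slitHalfPlane (max_lt_iff.1 hσ).1 (max_lt_iff.1 hσ).2
  have hhalf : StarConvex ℝ (σ : ℂ) {s : ℂ | σ₀ < s.re} :=
    (convex_halfSpace_re_gt σ₀).starConvex hmem.1
  have hslit : StarConvex ℝ (σ : ℂ) {s : ℂ | s - 1 ∈ Complex.slitPlane} := by
    have hstar := Complex.starConvex_ofReal_slitPlane (sub_pos.2 (max_lt_iff.1 hσ).2)
    rw [Complex.ofReal_sub, Complex.ofReal_one, sub_eq_add_neg] at hstar
    simp_rw [sub_eq_add_neg]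
    exact hstar.preimage_add_left
  exact ((hhalf.inter hslit).isPathConnected hmem).isConnected.isPreconnected

lemma differentiableAt_riemannZeta_two_mul_div (hs : 1 / 2 < s.re) (hs1 : s ≠ 1)
    (hζ : riemannZeta s ≠ 0) :
    DifferentiableAt ℂ (fun s => riemannZeta (2 * s) / riemannZeta s) s := by
  have h2s : 2 * s ≠ 1 := fun h => by
    have hre := congrArg Complex.re h
    simp only [Complex.mul_re, Complex.re_ofNat, Complex.im_ofNat, zero_mul, sub_zero,
      Complex.one_re] at hre
    linarith
  exact (DifferentiableAt.comp (g := riemannZeta) s (differentiableAt_riemannZeta h2s)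
    (by fun_prop)).div (differentiableAt_riemannZeta hs1) hζ

lemma frequently_ofReal_nhdsNE {p : ℂ → Prop} {a : ℝ} (h : ∀ t > a, p (t : ℂ)) :
    ∃ᶠ z in nhdsWithin (a : ℂ) {(a : ℂ)}ᶜ, p z := by
  have hofReal : Tendsto (fun t : ℝ => (t : ℂ)) (nhdsWithin a (Set.Ioi a))
      (nhdsWithin (a : ℂ) {(a : ℂ)}ᶜ) :=
    Complex.continuous_ofReal.continuousWithinAt.tendsto_nhdsWithin
      fun t (ht : a < t) => by simpa using ht.ne'
  have hp : ∀ᶠ t : ℝ in nhdsWithin a (Set.Ioi a), p t := eventually_mem_nhdsWithin.mono h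
  exact hofReal.frequently hp.frequently

lemma exp_primeSumLimit_add_eulerCorrection_eqOn (hσ₀ : 1 / 2 ≤ σ₀)
    (hζ : ∀ s : ℂ, σ₀ < s.re → riemannZeta s ≠ 0) :
    Set.EqOn (fun s => Complex.exp (primeSumLimit s + eulerCorrection s))
      (fun s => riemannZeta (2 * s) / riemannZeta s) (slitHalfPlane σ₀) := by
  obtain ⟨σ, hσ⟩ := exists_gt (max σ₀ 1)
  obtain ⟨hσ₀σ, h1σ⟩ := max_lt_iff.1 hσ
  refine AnalyticOnNhd.eqOn_of_preconnected_of_frequently_eq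
    (DifferentiableOn.analyticOnNhd (fun s hs => ?_) (isOpen_slitHalfPlane σ₀))
    (DifferentiableOn.analyticOnNhd (fun s hs => ?_) (isOpen_slitHalfPlane σ₀))
    (isPreconnected_slitHalfPlane σ₀) (ofReal_mem_slitHalfPlane hσ₀σ h1σ)
    (frequently_ofReal_nhdsNE fun t ht => ?_)
  · obtain ⟨β, hβ, K, hK⟩ := exists_lt_re_abs_theta_sub_le hσ₀ hζ hs.1
    exact ((differentiableAt_primeSumLimit hs.2 hK hβ).add
      (differentiableAt_eulerCorrection (hσ₀.trans_lt hs.1))).cexp.differentiableWithinAt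
  · exact (differentiableAt_riemannZeta_two_mul_div (hσ₀.trans_lt hs.1)
      (sub_ne_zero.1 (Complex.slitPlane_ne_zero hs.2)) (hζ s hs.1)).differentiableWithinAt
  · have hmem := ofReal_mem_slitHalfPlane (hσ₀σ.trans ht) (h1σ.trans ht)
    exact tendsto_nhds_unique (tendsto_exp_neg_expIntegralE1_mul_prod hσ₀ hζ hmem.1 hmem.2)
      (tendsto_exp_neg_expIntegralE1_mul_prod_ofReal (h1σ.trans ht))

end Continuation

theorem zeta_ratio_continuation_general {σ₀ : ℝ} (hσ₀ : 1 / 2 ≤ σ₀)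
    (hζ : ∀ s : ℂ, σ₀ < s.re → riemannZeta s ≠ 0) {s : ℂ} (hs : σ₀ < s.re)
    (hs' : s - 1 ∈ Complex.slitPlane) :
    Tendsto
      (fun x : ℝ =>
        Complex.exp (-expIntegralE1 ((s - 1) * (Real.log x : ℂ))) *
          ∏ p ∈ Nat.primesBelow (⌊x⌋₊ + 1), (1 + (p : ℂ) ^ (-s))⁻¹)
      atTop (nhds (riemannZeta (2 * s) / riemannZeta s)) := by
  have hlim := tendsto_exp_neg_expIntegralE1_mul_prod hσ₀ hζ hs hs'
  have heq : Complex.exp (primeSumLimit s + eulerCorrection s) = _ :=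
    exp_primeSumLimit_add_eulerCorrection_eqOn hσ₀ hζ ⟨hs, hs'⟩
  rwa [heq] at hlim

lemma riemannZeta_ne_zero_of_riemannHypothesis (RH : RiemannHypothesis) {s : ℂ}
    (hs : 1 / 2 < s.re) : riemannZeta s ≠ 0 := by
  rcases eq_or_ne s 1 with rfl | hs1
  · exact riemannZeta_one_ne_zero
  · refine fun hzero => hs.ne' (RH s hzero ?_ hs1)
    rintro ⟨n, rfl⟩
    have hre : (-2 * ((n : ℂ) + 1)).re = -2 * (n + 1) := by simp
    linarith [n.cast_nonneg (α := ℝ)]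

lemma mem_slitPlane_of_not_exists_nonpos {z : ℂ} (hz : ¬∃ r : ℝ, r ≤ 0 ∧ z = (r : ℂ)) :
    z ∈ Complex.slitPlane := by
  rw [Complex.mem_slitPlane_iff]
  contrapose! hz
  exact ⟨z.re, hz.1, Complex.ext rfl (by simpa using hz.2)⟩

/-- Assuming RH, for `Re(s) > 1/2` with `s - 1` off the nonpositive real axis,
`ζ(2s)/ζ(s) = lim_{x→∞} exp(−E₁((s-1)·log x)) · ∏_{p ≤ x} (1 + p^{-s})⁻¹`. -/
theorem zeta_ratio_continuation (RH : RiemannHypothesis) (s : ℂ)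
    (hs : 1 / 2 < s.re) (hs' : ¬∃ r : ℝ, r ≤ 0 ∧ s - 1 = (r : ℂ)) :
    Tendsto
      (fun x : ℝ =>
        Complex.exp (-expIntegralE1 ((s - 1) * (Real.log x : ℂ))) *
          ∏ p ∈ Nat.primesBelow (⌊x⌋₊ + 1), (1 + (p : ℂ) ^ (-s))⁻¹)
      atTop (nhds (riemannZeta (2 * s) / riemannZeta s)) :=
  zeta_ratio_continuation_general le_rfl
    (fun _ => riemannZeta_ne_zero_of_riemannHypothesis RH) hs
    (mem_slitPlane_of_not_exists_nonpos hs')
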